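/- Fix s ∈ ℂ with Re s > 0 and let x > 0 be real. Then ∑_{n=1}^∞ σ_s(n) n^{−1/2} e^{−2π√(2nx)} sin(π/4 − 2π√(2nx)) = 4π( (√x/2)·ζ(−s) + ζ(1/2)ζ(1/2−s)/(4π√2) + Γ(s+1/2)ζ(−s)/(2^{s+3} π^{s+3/2} x^{s+1/2}) ) + Γ(s+1/2)/(2^s π^{s+1/2}) · { ∑_{1≤n<x} σ_s(n) n^{−s−1/2} [ −sin(π/4 − πs/2) + (n^{s+1/2}/(2 x^{s+1/2}))·( (1+in/x)^{−(s+1/2)} + (1−in/x)^{−(s+1/2)} ) ] + (1/2) ∑_{n≥x} σ_s(n) n^{−s−1/2} [ cos(π/4+πs/2)·( (1+ix/n)^{−(s+1/2)} + (1−ix/n)^{−(s+1/2)} − 2 ) + i·sin(π/4+πs/2)·( (1+ix/n)^{−(s+1/2)} − (1−ix/n)^{−(s+1/2)} ) ] }. -/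

import Mathlib

open Complex Finset
open scoped Real BigOperators Classical

/-- Generalized divisor sum `σ_s(n) = ∑_{d ∣ n} d^s` with complex exponent. -/
noncomputable def csigma (s : ℂ) (n : ℕ) : ℂ := ∑ d ∈ n.divisors, (d : ℂ) ^ s


open MeasureTheory Set Filter Topology in
lemma laplace_diff (g : ℝ → ℂ)
    (hg : ∀ ε : ℝ, 0 < ε → IntegrableOn (fun t : ℝ => g t * cexp (-((ε : ℂ) * t))) (Set.Ioi 0)) :
    DifferentiableOn ℂ (fun c : ℂ => ∫ t in Set.Ioi (0:ℝ), g t * cexp (-(c * t))) {c | 0 < c.re} := by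
  intro c hc
  simp only [Set.mem_ofPred_eq] at hc
  have hmeas : ∀ c : ℂ, AEStronglyMeasurable (fun t : ℝ => g t * cexp (-(c * t)))
      (volume.restrict (Set.Ioi 0)) := by
    intro c
    have h1 := (hg 1 one_pos).aestronglyMeasurable
    have h2 : AEStronglyMeasurable (fun t : ℝ => cexp (-((c - 1) * t)))
      (volume.restrict (Set.Ioi 0)) := by
      apply Continuous.aestronglyMeasurable; fun_prop
    refine (h1.mul h2).congr (Filter.Eventually.of_forall fun t => ?_)
    simp only [Pi.mul_apply]
    rw [mul_assoc, ← Complex.exp_add]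
    congr 2; push_cast; ring
  set ε := c.re / 2 with hε
  have hε0 : 0 < ε := by positivity
  have key := hasDerivAt_integral_of_dominated_loc_of_deriv_le
    (μ := volume.restrict (Set.Ioi (0:ℝ))) (s := {z : ℂ | ε < z.re}) (x₀ := c)
    (F := fun c t => g t * cexp (-(c * t)))
    (F' := fun c t => -(t:ℂ) * (g t * cexp (-(c * t))))
    (bound := fun t => (2/ε) * ‖g t * cexp (-(((ε/2 : ℝ) : ℂ) * t))‖) ?_ ?_ ?_ ?_ ?_ ?_ ?_
  · exact key.2.differentiableAt.differentiableWithinAt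
  · exact (isOpen_lt continuous_const Complex.continuous_re).mem_nhds (by simp [hε]; linarith)
  · exact Filter.Eventually.of_forall hmeas
  · have := hg c.re hc
    refine Integrable.mono this (hmeas c) (Filter.Eventually.of_forall fun t => ?_)
    simp [Complex.norm_exp]
  · exact (Continuous.aestronglyMeasurable (by fun_prop)).mul (hmeas c)
  · refine (ae_restrict_mem measurableSet_Ioi).mono fun t ht z hz => ?_
    simp only [Set.mem_Ioi, Set.mem_ofPred_eq] at ht hz
    simp only [norm_mul, norm_neg, Complex.norm_exp, Complex.norm_real, Real.norm_eq_abs, abs_of_pos ht]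
    simp only [neg_re, mul_re, ofReal_re, ofReal_im, mul_zero, sub_zero]
    have e1 : Real.exp (-(z.re * t)) ≤ Real.exp (-(ε/2*t)) * Real.exp (-(ε/2*t)) := by
      rw [← Real.exp_add]; apply Real.exp_le_exp.2; nlinarith
    have e2 : t * Real.exp (-(ε/2*t)) ≤ 2/ε := by
      have : ε/2*t ≤ Real.exp (ε/2*t) := by linarith [Real.add_one_le_exp (ε/2*t)]
      rw [Real.exp_neg, ← div_eq_mul_inv, div_le_div_iff₀ (Real.exp_pos _) hε0]
      linarith
    calc t * (‖g t‖ * Real.exp (-(z.re * t)))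
        ≤ t * (‖g t‖ * (Real.exp (-(ε/2*t)) * Real.exp (-(ε/2*t)))) := by gcongr
      _ = (t * Real.exp (-(ε/2*t))) * (‖g t‖ * Real.exp (-(ε/2*t))) := by ring
      _ ≤ _ := by gcongr
  · exact ((hg (ε/2) (by positivity)).norm).const_mul _
  · refine Filter.Eventually.of_forall fun t z hz => ?_
    have : HasDerivAt (fun z : ℂ => cexp (-(z * t))) (cexp (-(z*t)) * (-(1 * (t:ℂ)))) z :=
      (((hasDerivAt_id z).mul_const (t:ℂ)).neg).cexp
    have h2 := this.const_mul (g t)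
    have e : g t * (cexp (-(z * t)) * (-(1 * (t:ℂ)))) = -(t:ℂ) * (g t * cexp (-(z * t))) := by ring
    rw [e] at h2
    exact h2

lemma halfplane_identity (F G : ℂ → ℂ) (hF : DifferentiableOn ℂ F {c | 0 < c.re})
    (hG : DifferentiableOn ℂ G {c | 0 < c.re}) (h : ∀ r : ℝ, 0 < r → F r = G r) :
    ∀ c : ℂ, 0 < c.re → F c = G c := by
  have ho : IsOpen {c : ℂ | 0 < c.re} := isOpen_lt continuous_const Complex.continuous_re
  have hp : IsPreconnected {c : ℂ | 0 < c.re} := (convex_halfSpace_re_gt 0).isPreconnected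
  have := AnalyticOnNhd.eqOn_of_preconnected_of_frequently_eq (z₀ := 1)
    (hF.analyticOnNhd ho) (hG.analyticOnNhd ho) hp (by simp) ?_
  · exact fun c hc => this hc
  · have ht : Filter.Tendsto (fun r : ℝ => (r : ℂ)) (nhdsWithin 1 (Set.Ioi 1)) (nhdsWithin (1:ℂ) {1}ᶜ) := by
      apply tendsto_nhdsWithin_of_tendsto_nhds_of_eventually_within
      · exact (Complex.continuous_ofReal.tendsto' 1 1 (by simp)).mono_left nhdsWithin_le_nhds
      · filter_upwards [self_mem_nhdsWithin] with r hr
        simp only [Set.mem_Ioi] at hr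
        simp only [Set.mem_compl_iff, Set.mem_singleton_iff]
        intro hh
        have : r = 1 := by exact_mod_cast hh
        linarith
    apply ht.frequently
    apply Filter.Eventually.frequently
    filter_upwards [self_mem_nhdsWithin] with r hr
    simp only [Set.mem_Ioi] at hr
    exact h r (by linarith)

lemma gamma_laplace (a : ℂ) (ha : 0 < a.re) (c : ℂ) (hc : 0 < c.re) :
    ∫ t in Set.Ioi (0:ℝ), (t:ℂ) ^ (a - 1) * cexp (-(c * t)) = Gamma a * c ^ (-a) := by
  refine halfplane_identity (fun c => ∫ t in Set.Ioi (0:ℝ), (t:ℂ) ^ (a - 1) * cexp (-(c * t)))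
    (fun c => Gamma a * c ^ (-a)) ?_ ?_ ?_ c hc
  · apply laplace_diff
    intro ε hε
    have := Complex.GammaIntegral_convergent ha
    have h2 := (MeasureTheory.integrableOn_Ioi_comp_mul_left_iff
      (fun x : ℝ => ((-x).exp : ℂ) * (x:ℂ) ^ (a - 1)) 0 hε).2 (by simpa using this)
    have h3 := h2.const_mul ((1/ε : ℂ) ^ (a-1))
    refine h3.congr ?_
    refine (MeasureTheory.ae_restrict_mem measurableSet_Ioi).mono fun t ht => ?_
    simp only [Set.mem_Ioi] at ht
    simp only
    push_cast
    rw [mul_cpow_ofReal_nonneg hε.le ht.le]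
    have : (1/(ε:ℂ))^(a-1) * (ε:ℂ)^(a-1) = 1 := by
      have := mul_cpow_ofReal_nonneg (inv_pos.2 hε).le hε.le (a-1)
      rw [one_div, ← ofReal_inv, ← this, ← ofReal_mul, inv_mul_cancel₀ hε.ne']; simp
    linear_combination (cexp (-(ε*t)) * (t:ℂ)^(a-1)) * this
  · intro z hz
    apply DifferentiableAt.differentiableWithinAt
    refine DifferentiableAt.const_mul ?_ _
    apply DifferentiableAt.cpow_const differentiableAt_id
    left; exact hz
  · intro r hr
    show _ = Gamma a * (r:ℂ)^(-a)
    rw [Complex.integral_cpow_mul_exp_neg_mul_Ioi ha hr, mul_comm, cpow_neg, one_div]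
    congr 1
    rw [inv_cpow]
    rw [arg_ofReal_of_nonneg hr.le]; exact Real.pi_pos.ne


lemma rmul_cpow (r : ℝ) (hr : 0 < r) (z w : ℂ) : ((r:ℂ) * z) ^ w = (r:ℂ) ^ w * z ^ w := by
  by_cases hz : z = 0
  · subst hz
    by_cases hw : w = 0
    · simp [hw]
    · simp [zero_cpow hw]
  · have hr' : (r:ℂ) ≠ 0 := by exact_mod_cast hr.ne'
    rw [cpow_def_of_ne_zero (mul_ne_zero hr' hz), cpow_def_of_ne_zero hr', cpow_def_of_ne_zero hz,
      Complex.log_ofReal_mul hr hz, ← Complex.exp_add, ofReal_log hr.le]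
    congr 1; ring

lemma norm_cpow_le' (z w : ℂ) : ‖z ^ w‖ ≤ ‖z‖ ^ w.re * Real.exp (π * |w.im|) := by
  refine (Complex.norm_cpow_le z w).trans ?_
  rw [div_eq_mul_inv, ← Real.exp_neg]
  gcongr
  have h1 : |z.arg| ≤ π := Complex.abs_arg_le_pi z
  calc -(z.arg * w.im) ≤ |z.arg * w.im| := neg_le_abs _
    _ = |z.arg| * |w.im| := abs_mul _ _
    _ ≤ _ := by gcongr

lemma norm_line_ge (u v : ℝ) : |v| ≤ ‖(u:ℂ) + I * v‖ := by
  have := Complex.abs_im_le_norm ((u:ℂ) + I * v)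
  simpa using this

/-- Norm bound for `(u + i v)^w` with nonpositive real part of the exponent. -/
lemma norm_line_cpow_le (u v : ℝ) (hv : v ≠ 0) (w : ℂ) (hw : w.re ≤ 0) :
    ‖((u:ℂ) + I * v) ^ w‖ ≤ |v| ^ w.re * Real.exp (π * |w.im|) := by
  refine (norm_cpow_le' _ _).trans ?_
  refine mul_le_mul_of_nonneg_right ?_ (Real.exp_pos _).le
  exact Real.rpow_le_rpow_of_nonpos (abs_pos.2 hv) (norm_line_ge u v) hw

noncomputable def lipF (μ : ℂ) (y : ℝ) (t : ℝ) : ℂ :=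
  ((max t 0 : ℝ) : ℂ) ^ (μ - 1) * cexp (-((2 * π * y * t : ℝ) : ℂ))

lemma lipF_cont (μ : ℂ) (hμ : 1 < μ.re) (y : ℝ) : Continuous (lipF μ y) := by
  unfold lipF
  have h1 : Continuous (fun x : ℝ => (x:ℂ) ^ (μ - 1)) :=
    Complex.continuous_ofReal_cpow_const (by simp; linarith)
  have h2 : Continuous (fun t : ℝ => max t 0) := by fun_prop
  have := h1.comp h2
  simp only [Function.comp_def] at this
  exact this.mul (by fun_prop)

lemma lipF_neg (μ : ℂ) (hμ : 1 < μ.re) (y t : ℝ) (ht : t ≤ 0) : lipF μ y t = 0 := by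
  have : μ - 1 ≠ 0 := by
    intro h
    have := congrArg Complex.re h
    simp at this; linarith
  simp [lipF, max_eq_right ht, zero_cpow this]

lemma lipF_decay (μ : ℂ) (hμ : 1 < μ.re) (y : ℝ) (hy : 0 < y) :
    lipF μ y =O[Filter.cocompact ℝ] (fun x : ℝ => |x| ^ (-2 : ℝ)) := by
  rw [cocompact_eq_atBot_atTop, Asymptotics.isBigO_sup]
  constructor
  · apply Asymptotics.IsBigO.of_bound 1
    filter_upwards [Filter.eventually_le_atBot 0] with t ht
    rw [lipF_neg μ hμ y t ht]; simp; positivity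
  · have h := (isLittleO_exp_neg_mul_rpow_atTop (a := 2 * π * y) (by positivity) (-2 - (μ.re - 1))).isBigO
    obtain ⟨C, hC⟩ := h.bound
    apply Asymptotics.IsBigO.of_bound C
    filter_upwards [hC, Filter.eventually_gt_atTop 0] with t ht ht0
    rw [lipF, max_eq_left ht0.le, norm_mul, norm_cpow_eq_rpow_re_of_pos ht0, ← ofReal_neg, ← ofReal_exp,
      Complex.norm_real, abs_of_pos ht0]
    rw [← neg_mul]
    have e : t ^ (μ - 1).re * t ^ (-2 - (μ.re - 1)) = t ^ (-2:ℝ) := by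
      rw [← Real.rpow_add ht0]; congr 1; simp
    calc t ^ (μ - 1).re * ‖Real.exp (-(2*π*y) * t)‖ ≤ t ^ (μ - 1).re * (C * ‖t ^ (-2 - (μ.re - 1))‖) := by gcongr
      _ = C * t ^ (-2:ℝ) := by rw [Real.norm_of_nonneg (by positivity), ← e]; ring
      _ = _ := by rw [Real.norm_of_nonneg (by positivity)]

lemma lipF_fourier (μ : ℂ) (hμ : 1 < μ.re) (y : ℝ) (hy : 0 < y) (ξ : ℝ) :
    FourierTransform.fourier (lipF μ y) ξ = Gamma μ * (2 * π : ℂ) ^ (-μ) * ((y:ℂ) + I * ξ) ^ (-μ) := by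
  rw [Real.fourier_real_eq_integral_exp_smul]
  have e1 : ∫ v : ℝ, cexp (((-2 * π * v * ξ : ℝ) : ℂ) * I) • lipF μ y v =
      ∫ v in Set.Ioi (0:ℝ), cexp (((-2 * π * v * ξ : ℝ) : ℂ) * I) • lipF μ y v := by
    symm
    apply MeasureTheory.setIntegral_eq_integral_of_forall_compl_eq_zero
    intro t ht
    rw [lipF_neg μ hμ y t (by simpa using ht)]; simp
  rw [e1]
  have e2 : ∫ v in Set.Ioi (0:ℝ), cexp (((-2 * π * v * ξ : ℝ) : ℂ) * I) • lipF μ y v =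
     ∫ t in Set.Ioi (0:ℝ), (t:ℂ) ^ (μ - 1) * cexp (-(((2 * π : ℝ) * ((y:ℂ) + I * ξ)) * t)) := by
    apply MeasureTheory.setIntegral_congr_fun measurableSet_Ioi
    intro t ht
    simp only [Set.mem_Ioi] at ht
    simp only [lipF, max_eq_left ht.le, smul_eq_mul]
    rw [mul_left_comm, ← Complex.exp_add]
    congr 2
    push_cast; ring
  rw [e2, gamma_laplace μ (by linarith) _ (by simp; positivity), rmul_cpow _ (by positivity)]
  push_cast; ring

lemma summable_line (μ : ℂ) (hμ : 1 < μ.re) (y : ℝ) :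
    Summable (fun m : ℕ => ((y:ℂ) + I * ((m:ℂ)+1)) ^ (-μ)) := by
  have hs : Summable (fun m : ℕ => (((m+1 : ℕ) : ℝ)) ^ (-μ.re) * Real.exp (π * |(-μ).im|)) :=
    ((summable_nat_add_iff 1).2 (Real.summable_nat_rpow.2 (by linarith : -μ.re < -1))).mul_right _
  refine Summable.of_norm_bounded hs fun m => ?_
  have := norm_line_cpow_le y ((m:ℝ)+1) (by positivity) (-μ) (by simp; linarith)
  rw [abs_of_pos (by positivity : (0:ℝ) < (m:ℝ)+1)] at this
  push_cast at this ⊢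
  simpa using this

lemma summable_line' (μ : ℂ) (hμ : 1 < μ.re) (y : ℝ) :
    Summable (fun m : ℕ => ((y:ℂ) - I * ((m:ℂ)+1)) ^ (-μ)) := by
  have hs : Summable (fun m : ℕ => (((m+1 : ℕ) : ℝ)) ^ (-μ.re) * Real.exp (π * |(-μ).im|)) :=
    ((summable_nat_add_iff 1).2 (Real.summable_nat_rpow.2 (by linarith : -μ.re < -1))).mul_right _
  refine Summable.of_norm_bounded hs fun m => ?_
  have := norm_line_cpow_le y (-((m:ℝ)+1)) (neg_ne_zero.2 (by positivity)) (-μ) (by simp; linarith)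
  rw [abs_neg, abs_of_pos (by positivity : (0:ℝ) < (m:ℝ)+1)] at this
  push_cast at this ⊢
  rw [mul_neg, ← sub_eq_add_neg] at this
  simpa using this

lemma tsum_int_pos (f : ℤ → ℂ) (hf : ∀ n : ℤ, n ≤ 0 → f n = 0) :
    ∑' n : ℤ, f n = ∑' k : ℕ, f ((k:ℤ)+1) := by
  symm
  apply Function.Injective.tsum_eq (g := fun k : ℕ => (k:ℤ)+1)
  · intro a b h
    simpa using h
  · intro n hn
    simp only [Function.mem_support] at hn
    have hn0 : 0 < n := by
      by_contra hc
      exact hn (hf n (not_lt.1 hc))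
    exact ⟨(n-1).toNat, by simp only; omega⟩

/-- Lipschitz summation formula. -/
lemma lipschitz_formula (μ : ℂ) (hμ : 1 < μ.re) (y : ℝ) (hy : 0 < y) :
    ∑' k : ℕ, ((k:ℂ)+1) ^ (μ - 1) * cexp (-((2 * π * y * ((k:ℝ)+1) : ℝ) : ℂ)) =
      Gamma μ * (2 * π : ℂ) ^ (-μ) * ((y:ℂ) ^ (-μ) +
        ∑' m : ℕ, (((y:ℂ) + I * ((m:ℂ)+1)) ^ (-μ) + ((y:ℂ) - I * ((m:ℂ)+1)) ^ (-μ))) := by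
  have hFs : Summable (fun n : ℤ => ((y:ℂ) + I * (n:ℂ)) ^ (-μ)) := by
    apply Summable.of_add_one_of_neg_add_one
    · simpa using summable_line μ hμ y
    · have := summable_line' μ hμ y
      push_cast
      simpa only [mul_neg, ← sub_eq_add_neg] using this
  have hP := Real.tsum_eq_tsum_fourier_of_rpow_decay_of_summable (lipF_cont μ hμ y)
    one_lt_two (lipF_decay μ hμ y hy) (by
      simp only [lipF_fourier μ hμ y hy]
      have := hFs.mul_left (Gamma μ * (2 * π : ℂ) ^ (-μ))
      simpa using this) 0
  simp only [lipF_fourier μ hμ y hy, zero_add] at hP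
  have e1 : ∑' n : ℤ, lipF μ y n = ∑' k : ℕ, ((k:ℂ)+1) ^ (μ - 1) * cexp (-((2 * π * y * ((k:ℝ)+1) : ℝ) : ℂ)) := by
    rw [tsum_int_pos (fun n : ℤ => lipF μ y n) (fun n hn => lipF_neg μ hμ y n (by exact_mod_cast hn))]
    apply tsum_congr
    intro k
    push_cast
    rw [lipF, max_eq_left (by positivity)]
    push_cast; rfl
  rw [← e1, hP]
  simp only [QuotientAddGroup.mk_zero, fourier_eval_zero, mul_one]
  rw [tsum_mul_left]
  congr 1
  have : ∀ n : ℤ, ((y:ℂ) + I * ((n:ℝ):ℂ)) ^ (-μ) = ((y:ℂ) + I * (n:ℂ)) ^ (-μ) := fun n => by simp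
  simp only [this]
  rw [tsum_of_add_one_of_neg_add_one (f := fun n : ℤ => ((y:ℂ) + I * (n:ℂ)) ^ (-μ)) (by simpa using summable_line μ hμ y)
    (by push_cast; simpa only [mul_neg, ← sub_eq_add_neg] using summable_line' μ hμ y)]
  rw [(summable_line μ hμ y).tsum_add (summable_line' μ hμ y)]
  push_cast
  simp only [mul_neg, ← sub_eq_add_neg, mul_zero, add_zero]
  ring


lemma summable_shift_rpow (a : ℝ) (ha : a < -1) : Summable (fun m : ℕ => ((m:ℝ)+1) ^ a) := by
  have := (summable_nat_add_iff 1).2 (Real.summable_nat_rpow.2 ha)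
  simpa using this

lemma summable_rpow_exp (a c : ℝ) (hc : 0 < c) :
    Summable (fun k : ℕ => ((k:ℝ)+1) ^ a * Real.exp (-(c * ((k:ℝ)+1)))) := by
  obtain ⟨N, hN⟩ := exists_nat_ge a
  have h := (summable_nat_add_iff 1).2 (Real.summable_pow_mul_exp_neg_nat_mul N hc)
  refine Summable.of_nonneg_of_le (fun k => by positivity) (fun k => ?_) h
  push_cast
  rw [neg_mul]
  gcongr
  rw [← Real.rpow_natCast]
  apply Real.rpow_le_rpow_of_exponent_le
  · linarith [(Nat.cast_nonneg k : (0:ℝ) ≤ k)]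
  · exact hN

lemma line_hasDeriv (v : ℝ) (hv : v ≠ 0) (w : ℂ) (u : ℝ) :
    HasDerivAt (fun u : ℝ => ((u:ℂ) + I * v) ^ w) (w * ((u:ℂ) + I * v) ^ (w - 1)) u := by
  have h1 : HasDerivAt (fun z : ℂ => z + I * v) 1 (u:ℂ) := (hasDerivAt_id _).add_const _
  have h2 := h1.cpow_const (c := w) (Or.inr (by simpa using hv))
  simpa using h2.comp_ofReal

lemma line_diff1 (v : ℝ) (hv : v ≠ 0) (w : ℂ) (hw : w.re ≤ 1) (u : ℝ) (hu : 0 ≤ u) :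
    ‖((u:ℂ) + I * v) ^ w - (I * v) ^ w‖ ≤ ‖w‖ * (|v| ^ (w.re - 1) * Real.exp (π * |w.im|)) * u := by
  have := norm_image_sub_le_of_norm_deriv_le_segment' (a := 0) (b := u)
    (f := fun u : ℝ => ((u:ℂ) + I * v) ^ w) (f' := fun u : ℝ => w * ((u:ℂ) + I * v) ^ (w - 1))
    (C := ‖w‖ * (|v| ^ (w.re - 1) * Real.exp (π * |w.im|)))
    (fun x _ => (line_hasDeriv v hv w x).hasDerivWithinAt) (fun x _ => ?_) u ⟨hu, le_rfl⟩
  · simpa using this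
  · rw [norm_mul]
    gcongr
    have := norm_line_cpow_le x v hv (w-1) (by simpa using hw)
    simpa using this

lemma line_diff2 (v : ℝ) (hv : v ≠ 0) (w : ℂ) (hw : w.re ≤ 2) (y : ℝ) (hy : 0 ≤ y) :
    ‖((y:ℂ) + I * v) ^ w - (I * v) ^ w - w * y * (I * v) ^ (w - 1)‖ ≤
      ‖w‖ * (‖w - 1‖ * (|v| ^ (w.re - 2) * Real.exp (π * |w.im|)) * y) * y := by
  have := norm_image_sub_le_of_norm_deriv_le_segment' (a := 0) (b := y)
    (f := fun u : ℝ => ((u:ℂ) + I * v) ^ w - w * u * (I * v) ^ (w - 1))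
    (f' := fun u : ℝ => w * ((u:ℂ) + I * v) ^ (w - 1) - w * (I * v) ^ (w - 1))
    (C := ‖w‖ * (‖w - 1‖ * (|v| ^ (w.re - 2) * Real.exp (π * |w.im|)) * y))
    (fun x _ => ?_) (fun x hx => ?_) y ⟨hy, le_rfl⟩
  · have e : ((y:ℂ) + I * v) ^ w - (I * v) ^ w - w * y * (I * v) ^ (w - 1) =
      ((y:ℂ) + I * v) ^ w - w * y * (I * v) ^ (w - 1) - (((0:ℝ):ℂ) + I * v) ^ w +  w * ((0:ℝ):ℂ) * (I * v) ^ (w - 1) := by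
      simp; ring
    rw [e]
    simpa using this
  · apply HasDerivAt.hasDerivWithinAt
    apply (line_hasDeriv v hv w x).sub
    have : HasDerivAt (fun u : ℝ => (u:ℂ)) 1 x := Complex.ofRealCLM.hasDerivAt
    have h2 := (this.const_mul w).mul_const ((I * v) ^ (w - 1))
    simpa using h2
  · rw [← mul_sub, norm_mul]
    refine mul_le_mul_of_nonneg_left ?_ (norm_nonneg _)
    refine (line_diff1 v hv (w-1) (by simp; linarith) x hx.1).trans ?_
    have e : (w-1).re - 1 = w.re - 2 := by simp; ring
    rw [e]
    have e2 : (w-1).im = w.im := by simp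
    rw [e2]
    exact mul_le_mul_of_nonneg_left hx.2.le (by positivity)

noncomputable def lq (ν : ℂ) (m : ℕ) (y : ℝ) : ℂ :=
  ((y:ℂ) + I * ((m:ℂ)+1)) ^ (-ν) + ((y:ℂ) - I * ((m:ℂ)+1)) ^ (-ν)

noncomputable def rm (ν : ℂ) (m : ℕ) (y : ℝ) : ℂ :=
  lq ν m y - lq ν m 0 + ν * y * lq (ν+1) m 0

noncomputable def Rf (ν : ℂ) (y : ℝ) : ℂ :=
  (∑' k : ℕ, ((k:ℂ)+1) ^ (ν - 1) * cexp (-((2 * π * y * ((k:ℝ)+1) : ℝ) : ℂ)))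
    - Gamma ν * (2 * π : ℂ) ^ (-ν) * (y:ℂ) ^ (-ν) - riemannZeta (1 - ν)

noncomputable def Tf (ν : ℂ) (y : ℝ) : ℂ :=
  - (2 * π * y * riemannZeta (-ν)) + Gamma ν * (2 * π : ℂ) ^ (-ν) * ∑' m : ℕ, rm ν m y

lemma lq_diff1 (ν : ℂ) (hν : -1 ≤ ν.re) (m : ℕ) (y : ℝ) (hy : 0 ≤ y) :
    ‖lq ν m y - lq ν m 0‖ ≤ 2 * (‖ν‖ * (((m:ℝ)+1) ^ (-ν.re - 1) * Real.exp (π * |ν.im|)) * y) := by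
  have hm : (0:ℝ) < (m:ℝ)+1 := by positivity
  have h1 := line_diff1 ((m:ℝ)+1) hm.ne' (-ν) (by simp; linarith) y hy
  have h2 := line_diff1 (-((m:ℝ)+1)) (neg_ne_zero.2 hm.ne') (-ν) (by simp; linarith) y hy
  rw [abs_neg] at h2
  rw [abs_of_pos hm] at h1 h2
  simp only [norm_neg, neg_im, abs_neg, neg_re] at h1 h2
  have e : lq ν m y - lq ν m 0 =
    (((y:ℂ) + I * (((m:ℝ)+1 : ℝ) : ℂ)) ^ (-ν) - (I * (((m:ℝ)+1 : ℝ) : ℂ)) ^ (-ν)) +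
    (((y:ℂ) + I * ((-((m:ℝ)+1) : ℝ) : ℂ)) ^ (-ν) - (I * ((-((m:ℝ)+1) : ℝ) : ℂ)) ^ (-ν)) := by
    unfold lq
    push_cast
    simp only [mul_neg, sub_eq_add_neg, zero_add]
    ring
  rw [e]
  refine (norm_add_le _ _).trans ?_
  linarith

lemma rm_bound (ν : ℂ) (hν : -2 ≤ ν.re) (m : ℕ) (y : ℝ) (hy : 0 ≤ y) :
    ‖rm ν m y‖ ≤ 2 * (‖ν‖ * (‖ν + 1‖ * (((m:ℝ)+1) ^ (-ν.re - 2) * Real.exp (π * |ν.im|)) * y) * y) := by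
  have hm : (0:ℝ) < (m:ℝ)+1 := by positivity
  have h1 := line_diff2 ((m:ℝ)+1) hm.ne' (-ν) (by simp; linarith) y hy
  have h2 := line_diff2 (-((m:ℝ)+1)) (neg_ne_zero.2 hm.ne') (-ν) (by simp; linarith) y hy
  rw [abs_neg] at h2
  rw [abs_of_pos hm] at h1 h2
  have en : ‖-ν - 1‖ = ‖ν + 1‖ := by rw [← norm_neg]; congr 1; ring
  rw [en] at h1 h2
  simp only [norm_neg, neg_im, abs_neg, neg_re] at h1 h2
  have e : rm ν m y =
    (((y:ℂ) + I * (((m:ℝ)+1 : ℝ) : ℂ)) ^ (-ν) - (I * (((m:ℝ)+1 : ℝ) : ℂ)) ^ (-ν)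
       - -ν * y * (I * (((m:ℝ)+1 : ℝ) : ℂ)) ^ (-ν - 1)) +
    (((y:ℂ) + I * ((-((m:ℝ)+1) : ℝ) : ℂ)) ^ (-ν) - (I * ((-((m:ℝ)+1) : ℝ) : ℂ)) ^ (-ν)
       - -ν * y * (I * ((-((m:ℝ)+1) : ℝ) : ℂ)) ^ (-ν - 1)) := by
    unfold rm lq
    have : -(ν+1) = -ν - 1 := by ring
    rw [this]
    push_cast
    simp only [mul_neg, sub_eq_add_neg, zero_add]
    ring
  rw [e]
  refine (norm_add_le _ _).trans ?_
  linarith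

lemma lq_zero (ν : ℂ) (m : ℕ) : lq ν m 0 = 2 * Complex.cos (π * ν / 2) * ((m:ℂ)+1) ^ (-ν) := by
  have hm : (0:ℝ) < (m:ℝ)+1 := by positivity
  have e1 : (((0:ℝ):ℂ) + I * ((m:ℂ)+1)) = (((m:ℝ)+1 : ℝ):ℂ) * I := by push_cast; ring
  have e2 : (((0:ℝ):ℂ) - I * ((m:ℂ)+1)) = (((m:ℝ)+1 : ℝ):ℂ) * (-I) := by push_cast; ring
  unfold lq
  rw [e1, e2, rmul_cpow _ hm, rmul_cpow _ hm, cpow_def_of_ne_zero I_ne_zero,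
    cpow_def_of_ne_zero (neg_ne_zero.2 I_ne_zero), log_I, log_neg_I, Complex.cos]
  push_cast
  have a1 : (π:ℂ) / 2 * I * -ν = -(π * ν / 2) * I := by ring
  have a2 : -((π:ℂ) / 2) * I * -ν = (π * ν / 2) * I := by ring
  rw [a1, a2]
  ring

lemma lq_summable (ν : ℂ) (hν : 1 < ν.re) (y : ℝ) : Summable (fun m => lq ν m y) :=
  (summable_line ν hν y).add (summable_line' ν hν y)

lemma ne_neg_nat (ν : ℂ) (hν : 0 < ν.re) (n : ℕ) : ν ≠ -n := by
  intro h
  rw [h] at hν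
  simp at hν
  have : (0:ℝ) ≤ n := Nat.cast_nonneg n
  linarith

lemma lq_zero_sum (ν : ℂ) (hν : 1 < ν.re) :
    Gamma ν * (2 * π : ℂ) ^ (-ν) * ∑' m : ℕ, lq ν m 0 = riemannZeta (1 - ν) := by
  simp only [lq_zero]
  rw [tsum_mul_left, riemannZeta_one_sub (ne_neg_nat ν (by linarith))
    (by rintro rfl; simp at hν), zeta_eq_tsum_one_div_nat_add_one_cpow hν]
  simp only [cpow_neg, one_div]
  ring

lemma gamma_shift (ν : ℂ) (hν : ν ≠ 0) (y : ℝ) (S : ℂ) :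
    Gamma ν * (2 * π : ℂ) ^ (-ν) * (ν * y * S) = 2 * π * y * (Gamma (ν+1) * (2 * π : ℂ) ^ (-(ν+1)) * S) := by
  rw [Complex.Gamma_add_one ν hν]
  have h : (2 * π : ℂ) ≠ 0 := by
    have := Real.pi_pos.ne'
    simp [this]
  have : (2 * π : ℂ) ^ (-ν) = (2 * π : ℂ) ^ (-(ν+1)) * (2 * π : ℂ) := by
    have h2 := cpow_add (x := (2*π:ℂ)) (-(ν+1)) 1 h
    rw [cpow_one] at h2
    rw [← h2]; congr 1; ring
  rw [this]; ring

lemma Tf_eq_pos (ν : ℂ) (hν : 0 < ν.re) (y : ℝ) (hy : 0 ≤ y) :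
    Tf ν y = Gamma ν * (2 * π : ℂ) ^ (-ν) * ∑' m : ℕ, (lq ν m y - lq ν m 0) := by
  have hν0 : ν ≠ 0 := by rintro rfl; simp at hν
  have hs1 : Summable (fun m => lq ν m y - lq ν m 0) := by
    refine Summable.of_norm_bounded (g := fun m : ℕ => ((m:ℝ)+1) ^ (-ν.re - 1) * (2 * (‖ν‖ * Real.exp (π * |ν.im|) * y))) ?_ fun m => ?_
    · exact (summable_shift_rpow _ (by linarith)).mul_right _
    · exact (lq_diff1 ν (by linarith) m y hy).trans (le_of_eq (by ring))
  have hs2 : Summable (fun m => ν * y * lq (ν+1) m 0) := (lq_summable (ν+1) (by simp; linarith) 0).mul_left _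
  unfold Tf rm
  rw [hs1.tsum_add hs2, mul_add, tsum_mul_left, gamma_shift ν hν0, lq_zero_sum (ν+1) (by simp; linarith)]
  have : 1 - (ν+1) = -ν := by ring
  rw [this]; ring

lemma Rf_eq_Tf_big (ν : ℂ) (hν : 1 < ν.re) (y : ℝ) (hy : 0 < y) : Rf ν y = Tf ν y := by
  rw [Tf_eq_pos ν (by linarith) y hy.le, (lq_summable ν hν y).tsum_sub (lq_summable ν hν 0), mul_sub,
    lq_zero_sum ν hν, Rf, lipschitz_formula ν hν y hy]
  simp only [lq]
  ring

def UU : Set ℂ := {ν | -1 < ν.re ∧ ν ≠ 0 ∧ ν ≠ -1/2}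

lemma UU_open : IsOpen UU := by
  apply (isOpen_lt continuous_const Complex.continuous_re).and
  exact isOpen_ne.and isOpen_ne

lemma UU_preconn : IsPreconnected UU := by
  have hH1 : IsPreconnected {z : ℂ | -1 < z.re ∧ 0 < z.im} :=
    ((convex_halfSpace_re_gt (-1)).inter (convex_halfSpace_im_gt 0)).isPreconnected
  have hH2 : IsPreconnected {z : ℂ | -1 < z.re ∧ z.im < 0} :=
    ((convex_halfSpace_re_gt (-1)).inter (convex_halfSpace_im_lt 0)).isPreconnected
  have hV1 : IsPreconnected {z : ℂ | -1 < z.re ∧ z.re < -1/2} :=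
    ((convex_halfSpace_re_gt (-1)).inter (convex_halfSpace_re_lt (-1/2))).isPreconnected
  have hV2 : IsPreconnected {z : ℂ | -1/2 < z.re ∧ z.re < 0} :=
    ((convex_halfSpace_re_gt (-1/2)).inter (convex_halfSpace_re_lt 0)).isPreconnected
  have hV3 : IsPreconnected {z : ℂ | 0 < z.re} := (convex_halfSpace_re_gt 0).isPreconnected
  have a1 := IsPreconnected.union (⟨-3/4, 1⟩ : ℂ) (by simp; norm_num) (by simp; norm_num) hH1 hV1
  have a2 := IsPreconnected.union (⟨-3/4, -1⟩ : ℂ) (by simp; norm_num) (by simp; norm_num) a1 hH2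
  have a3 := IsPreconnected.union (⟨-1/4, -1⟩ : ℂ) (by simp; norm_num) (by simp; norm_num) a2 hV2
  have a4 := IsPreconnected.union (⟨1, -1⟩ : ℂ) (by simp) (by simp) a3 hV3
  convert a4 using 1
  ext z
  simp only [UU, Set.mem_ofPred_eq, Set.mem_union]
  constructor
  · rintro ⟨h1, h2, h3⟩
    rcases lt_trichotomy z.im 0 with h | h | h
    · tauto
    · have n1 : z.re ≠ 0 := fun hh => h2 (Complex.ext hh h)
      have n2 : z.re ≠ -1/2 := fun hh => h3 (Complex.ext (by rw [hh]; norm_num) (by rw [h]; norm_num))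
      rcases lt_or_gt_of_ne n1 with q | q
      · rcases lt_or_gt_of_ne n2 with q' | q' <;> tauto
      · tauto
    · tauto
  · intro h
    refine ⟨?_, ?_, ?_⟩
    · rcases h with (((⟨h,_⟩|⟨h,_⟩)|⟨h,_⟩)|⟨h,_⟩)|h <;> linarith
    · rintro rfl
      norm_num at h
    · rintro rfl
      norm_num at h

lemma series_diff (y : ℝ) (hy : 0 < y) : Differentiable ℂ
    (fun ν : ℂ => ∑' k : ℕ, ((k:ℂ)+1) ^ (ν - 1) * cexp (-((2 * π * y * ((k:ℝ)+1) : ℝ) : ℂ))) := by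
  intro ν₀
  have hs := summable_rpow_exp (ν₀.re) (2*π*y) (by positivity)
  have ho : IsOpen {ν : ℂ | ν.re < ν₀.re + 1} := isOpen_lt Complex.continuous_re continuous_const
  have := Complex.differentiableOn_tsum_of_summable_norm (U := {ν : ℂ | ν.re < ν₀.re + 1})
    (F := fun (k:ℕ) (ν:ℂ) => ((k:ℂ)+1) ^ (ν - 1) * cexp (-((2 * π * y * ((k:ℝ)+1) : ℝ) : ℂ))) hs ?_ ho ?_
  · exact this.differentiableAt (ho.mem_nhds (by simp))
  · intro k ν _
    apply DifferentiableAt.differentiableWithinAt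
    apply DifferentiableAt.mul_const
    apply DifferentiableAt.const_cpow (by fun_prop)
    left; exact_mod_cast Nat.succ_ne_zero k
  · intro k ν hν
    simp only [Set.mem_ofPred_eq] at hν
    rw [norm_mul, ← ofReal_neg, ← ofReal_exp, Complex.norm_real, Real.norm_of_nonneg (Real.exp_pos _).le]
    gcongr
    have : ((k:ℂ)+1) = (((k:ℝ)+1 : ℝ) : ℂ) := by push_cast; rfl
    rw [this, norm_cpow_eq_rpow_re_of_pos (by positivity)]
    apply Real.rpow_le_rpow_of_exponent_le
    · linarith [(Nat.cast_nonneg k : (0:ℝ) ≤ k)]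
    · simp; linarith

lemma two_pi_ne : (2 * π : ℂ) ≠ 0 := by
  have := Real.pi_pos.ne'
  simp [this]

lemma Gamma_diff (ν : ℂ) (hν : ν ∈ UU) : DifferentiableAt ℂ Gamma ν := by
  apply Complex.differentiableAt_Gamma
  intro m h
  rcases Nat.eq_zero_or_pos m with hm | hm
  · subst hm; exact hν.2.1 (by simpa using h)
  · have h1 := hν.1
    rw [h] at h1
    simp at h1
    omega

lemma Rf_diff (y : ℝ) (hy : 0 < y) : DifferentiableOn ℂ (fun ν => Rf ν y) UU := by
  intro ν hν
  apply DifferentiableAt.differentiableWithinAt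
  unfold Rf
  have hy' : (y:ℂ) ≠ 0 := by exact_mod_cast hy.ne'
  apply DifferentiableAt.fun_sub
  · apply DifferentiableAt.fun_sub
    · exact series_diff y hy ν
    · refine ((Gamma_diff ν hν).fun_mul ?_).fun_mul ?_
      · exact DifferentiableAt.const_cpow (by fun_prop) (Or.inl two_pi_ne)
      · exact DifferentiableAt.const_cpow (by fun_prop) (Or.inl hy')
  · refine DifferentiableAt.fun_comp' (g := riemannZeta) ν ?_ ?_
    · apply differentiableAt_riemannZeta
      simpa using hν.2.1
    · fun_prop

/-- Local neighbourhood with uniform bounds. -/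
def VV (ρ N : ℝ) : Set ℂ := {ν | -1 + ρ < ν.re ∧ ‖ν‖ < N}

lemma VV_open (ρ N : ℝ) : IsOpen (VV ρ N) :=
  (isOpen_lt continuous_const Complex.continuous_re).and (isOpen_lt continuous_norm continuous_const)

lemma rm_bound_VV (ρ N : ℝ) (hρ : 0 < ρ) (ν : ℂ) (hν : ν ∈ VV ρ N) (m : ℕ) (y : ℝ) (hy : 0 ≤ y) :
    ‖rm ν m y‖ ≤ ((m:ℝ)+1) ^ (-1-ρ) * (2 * (N * (N+1) * Real.exp (π * N)) * y ^ 2) := by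
  obtain ⟨h1, h2⟩ := hν
  refine (rm_bound ν (by linarith) m y hy).trans ?_
  have hN : 0 < N := lt_of_le_of_lt (norm_nonneg _) h2
  have e1 : ‖ν + 1‖ ≤ N + 1 := by
    refine (norm_add_le _ _).trans ?_
    simp; exact h2.le
  have e2 : ((m:ℝ)+1) ^ (-ν.re - 2) ≤ ((m:ℝ)+1) ^ (-1-ρ) := by
    apply Real.rpow_le_rpow_of_exponent_le
    · linarith [(Nat.cast_nonneg m : (0:ℝ) ≤ m)]
    · linarith
  have e3 : Real.exp (π * |ν.im|) ≤ Real.exp (π * N) := by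
    apply Real.exp_le_exp.2
    exact mul_le_mul_of_nonneg_left ((Complex.abs_im_le_norm ν).trans h2.le) Real.pi_pos.le
  calc _ ≤ 2 * (N * ((N+1) * (((m:ℝ)+1) ^ (-1-ρ) * Real.exp (π * N)) * y) * y) := by
        gcongr
    _ = _ := by ring

lemma lq_diff_nu (m : ℕ) (y : ℝ) : Differentiable ℂ (fun ν => lq ν m y) := by
  have h1 : ((y:ℂ) + I * ((m:ℂ)+1)) ≠ 0 := by
    intro h
    have := congrArg Complex.im h
    simp at this
    have h0 : (0:ℝ) < (m:ℝ)+1 := by positivity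
    linarith
  have h2 : ((y:ℂ) - I * ((m:ℂ)+1)) ≠ 0 := by
    intro h
    have := congrArg Complex.im h
    simp at this
    have h0 : (0:ℝ) < (m:ℝ)+1 := by positivity
    linarith
  intro ν
  unfold lq
  exact (DifferentiableAt.const_cpow (by fun_prop) (Or.inl h1)).fun_add
    (DifferentiableAt.const_cpow (by fun_prop) (Or.inl h2))

lemma rm_diff_nu (m : ℕ) (y : ℝ) : Differentiable ℂ (fun ν => rm ν m y) := by
  unfold rm
  have h1 := lq_diff_nu m y
  have h2 := lq_diff_nu m 0
  have h3 : Differentiable ℂ (fun ν => lq (ν+1) m 0) := h2.fun_comp (by fun_prop : Differentiable ℂ (fun ν : ℂ => ν + 1))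
  fun_prop

lemma mem_VV (ν : ℂ) (hν : -1 < ν.re) : ν ∈ VV ((ν.re+1)/2) (‖ν‖+1) := by
  constructor <;> linarith

lemma Tf_diff (y : ℝ) (hy : 0 ≤ y) : DifferentiableOn ℂ (fun ν => Tf ν y) UU := by
  intro ν hν
  apply DifferentiableAt.differentiableWithinAt
  unfold Tf
  apply DifferentiableAt.fun_add
  · apply DifferentiableAt.fun_neg
    apply DifferentiableAt.const_mul
    refine DifferentiableAt.fun_comp' (g := riemannZeta) ν ?_ ?_
    · apply differentiableAt_riemannZeta
      intro h
      have := hν.1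
      have h2 := congrArg Complex.re h
      simp at h2; linarith
    · fun_prop
  · refine ((Gamma_diff ν hν).fun_mul (DifferentiableAt.const_cpow (by fun_prop) (Or.inl two_pi_ne))).fun_mul ?_
    have hρ : 0 < (ν.re+1)/2 := by linarith [hν.1]
    have := Complex.differentiableOn_tsum_of_summable_norm (U := VV ((ν.re+1)/2) (‖ν‖+1))
      (F := fun (m:ℕ) (ν:ℂ) => rm ν m y)
      ((summable_shift_rpow (-1-(ν.re+1)/2) (by linarith)).mul_right (2 * ((‖ν‖+1) * ((‖ν‖+1)+1) * Real.exp (π * (‖ν‖+1))) * y ^ 2))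
      (fun m => (rm_diff_nu m y).differentiableOn) (VV_open _ _)
      (fun m w hw => rm_bound_VV _ _ hρ w hw m y hy)
    exact this.differentiableAt ((VV_open _ _).mem_nhds (mem_VV ν hν.1))

lemma Rf_eq_Tf (ν : ℂ) (hν : ν ∈ UU) (y : ℝ) (hy : 0 < y) : Rf ν y = Tf ν y := by
  have := AnalyticOnNhd.eqOn_of_preconnected_of_eventuallyEq (z₀ := 2)
    ((Rf_diff y hy).analyticOnNhd UU_open) ((Tf_diff y hy.le).analyticOnNhd UU_open) UU_preconn
    (by simp [UU]; norm_num) ?_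
  · exact this hν
  · have ho : IsOpen {ν : ℂ | 1 < ν.re} := isOpen_lt continuous_const Complex.continuous_re
    filter_upwards [ho.mem_nhds (by simp : (2:ℂ) ∈ {ν : ℂ | 1 < ν.re})] with w hw
    exact Rf_eq_Tf_big w hw y hy

/-- locally uniform bound `|R_ν(y)| ≤ C y` on `0 < y ≤ X`. -/
lemma Rf_bound (ν₀ : ℂ) (hν₀ : ν₀ ∈ UU) (X : ℝ) : ∃ V : Set ℂ, IsOpen V ∧ ν₀ ∈ V ∧ V ⊆ UU ∧
    ∃ C : ℝ, ∀ ν ∈ V, ∀ y : ℝ, 0 < y → y ≤ X → ‖Rf ν y‖ ≤ C * y := by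
  have hρ : 0 < (ν₀.re+1)/2 := by linarith [hν₀.1]
  have c1 : ContinuousAt (fun ν : ℂ => 2 * π * riemannZeta (-ν)) ν₀ := by
    apply ContinuousAt.mul continuousAt_const
    apply ContinuousAt.comp' (g := riemannZeta)
    · apply DifferentiableAt.continuousAt (𝕜 := ℂ)
      refine differentiableAt_riemannZeta (?_ : -ν₀ ≠ 1)
      intro h
      have := hν₀.1
      have h2 := congrArg Complex.re h
      simp at h2; linarith
    · fun_prop
  have c2 : ContinuousAt (fun ν : ℂ => Gamma ν * (2 * π : ℂ) ^ (-ν)) ν₀ := by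
    apply DifferentiableAt.continuousAt (𝕜 := ℂ)
    exact (Gamma_diff ν₀ hν₀).fun_mul (DifferentiableAt.const_cpow (by fun_prop) (Or.inl two_pi_ne))
  have b1 := c1.norm.eventually_lt_const (lt_add_one _)
  have b2 := c2.norm.eventually_lt_const (lt_add_one _)
  obtain ⟨V, hV, hVo, hVm⟩ := eventually_nhds_iff.1 (b1.and (b2.and ((Filter.eventually_mem_set.2 ((VV_open _ _).mem_nhds (mem_VV ν₀ hν₀.1))).and (Filter.eventually_mem_set.2 (UU_open.mem_nhds hν₀)))))
  set A := ‖2 * π * riemannZeta (-ν₀)‖ + 1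
  set B := ‖Gamma ν₀ * (2 * π : ℂ) ^ (-ν₀)‖ + 1
  set ρ := (ν₀.re+1)/2
  set N := ‖ν₀‖+1
  set K := (2 * (N * (N+1) * Real.exp (π * N))) with hK
  have hsum := summable_shift_rpow (-1-ρ) (by linarith)
  set Z := ∑' m : ℕ, ((m:ℝ)+1) ^ (-1-ρ) with hZ
  have hZ0 : 0 ≤ Z := tsum_nonneg fun m => by positivity
  have hN : 0 < N := by positivity
  have hB : 0 ≤ B := by positivity
  have hK0 : 0 ≤ K := by positivity
  refine ⟨V, hVo, hVm, fun w hw => (hV w hw).2.2.2, A + B * (Z * (K * X)), ?_⟩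
  intro ν hν y hy hyX
  obtain ⟨h1, h2, h3, h4⟩ := hV ν hν
  rw [Rf_eq_Tf ν h4 y hy]
  unfold Tf
  have hts : ‖∑' m : ℕ, rm ν m y‖ ≤ Z * (K * y^2) := by
    have := tsum_of_norm_bounded (f := fun m : ℕ => rm ν m y) (hsum.mul_right (K * y^2)).hasSum (fun m => rm_bound_VV ρ N hρ ν h3 m y hy.le)
    rwa [tsum_mul_right] at this
  calc _ ≤ ‖- (2 * π * y * riemannZeta (-ν))‖ + ‖Gamma ν * (2 * π : ℂ) ^ (-ν)  * ∑' m : ℕ, rm ν m y‖ := norm_add_le _ _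
    _ = ‖2 * π * riemannZeta (-ν)‖ * y + ‖Gamma ν * (2 * π : ℂ) ^ (-ν)‖ * ‖∑' m : ℕ, rm ν m y‖ := by
        rw [norm_neg, norm_mul (Gamma ν * _)]
        congr 1
        have : (2 * π * y * riemannZeta (-ν)) = (2 * π * riemannZeta (-ν)) * (y:ℂ) := by ring
        rw [this, norm_mul, Complex.norm_real, Real.norm_of_nonneg hy.le]
    _ ≤ A * y + B * (Z * (K * y^2)) := by gcongr
    _ ≤ A * y + B * (Z * (K * (X * y))) := by
        have : y^2 ≤ X * y := by nlinarith
        gcongr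
    _ = _ := by ring


noncomputable def psi (b t : ℝ) : ℝ := (t * √t)⁻¹ * Real.exp (-(b / t))

lemma psi_nonpos (b t : ℝ) (ht : t ≤ 0) : psi b t = 0 := by
  simp [psi, Real.sqrt_eq_zero'.2 ht]

lemma psi_nonneg (b t : ℝ) : 0 ≤ psi b t := by
  rcases le_or_gt t 0 with h | h
  · rw [psi_nonpos b t h]
  · unfold psi; positivity

lemma psi_le (b t : ℝ) (hb : 0 < b) : psi b t ≤ 2 / b ^ 2 * √t := by
  rcases le_or_gt t 0 with h | h
  · rw [psi_nonpos b t h, Real.sqrt_eq_zero'.2 h]; simp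
  · unfold psi
    have h1 : (b/t)^2/2 ≤ Real.exp (b/t) := by
      have := Real.pow_div_factorial_le_exp (b/t) (by positivity) 2
      simpa using this
    have hs : 0 < √t := Real.sqrt_pos.2 h
    have hss : √t * √t = t := Real.mul_self_sqrt h.le
    rw [Real.exp_neg]
    have h2 : (Real.exp (b/t))⁻¹ ≤ ((b/t)^2/2)⁻¹ := by
      apply inv_anti₀ (by positivity) h1
    calc (t * √t)⁻¹ * (Real.exp (b/t))⁻¹ ≤ (t * √t)⁻¹ * ((b/t)^2/2)⁻¹ := by gcongr
      _ = 2 / b^2 * (t / √t) := by field_simp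
      _ = 2 / b^2 * √t := by rw [Real.div_sqrt]

lemma psi_le' (b t : ℝ) (hb : 0 < b) (ht : 0 < t) : psi b t ≤ t ^ (-(3/2) : ℝ) := by
  unfold psi
  have : t ^ (-(3/2) : ℝ) = (t * √t)⁻¹ := by
    rw [Real.rpow_neg ht.le, Real.sqrt_eq_rpow, ← Real.rpow_one_add' ht.le (by norm_num)]
    norm_num
  rw [this]
  have h1 : Real.exp (-(b/t)) ≤ 1 := Real.exp_le_one_iff.2 (by simp; positivity)
  exact mul_le_of_le_one_right (by positivity) h1

lemma psi_cont (b : ℝ) (hb : 0 < b) : Continuous (psi b) := by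
  rw [continuous_iff_continuousAt]
  intro t
  rcases lt_trichotomy t 0 with h | h | h
  · have : psi b =ᶠ[nhds t] fun _ => 0 := by
      filter_upwards [eventually_lt_nhds h] with s hs
      exact psi_nonpos b s hs.le
    exact continuousAt_const.congr this.symm
  · subst h
    rw [ContinuousAt, psi_nonpos b 0 le_rfl]
    have : Filter.Tendsto (fun t => 2 / b^2 * √t) (nhds 0) (nhds 0) := by
      have h : Continuous (fun t => 2 / b^2 * √t) := by fun_prop
      exact h.tendsto' 0 0 (by simp)
    exact squeeze_zero (psi_nonneg b) (fun t => psi_le b t hb) this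
  · unfold psi
    have hs : 0 < √t := Real.sqrt_pos.2 h
    have h1 : t * √t ≠ 0 := by positivity
    have h2 : t ≠ 0 := h.ne'
    have c1 : ContinuousAt (fun t : ℝ => (t * √t)⁻¹) t := (by fun_prop : ContinuousAt (fun t : ℝ => t * √t) t).inv₀ h1
    have c2 : ContinuousAt (fun t : ℝ => b / t) t := continuousAt_const.div continuousAt_id h2
    exact c1.mul (Real.continuous_exp.continuousAt.comp c2.neg)

lemma psi_integrable (b : ℝ) (hb : 0 < b) :
    MeasureTheory.IntegrableOn (psi b) (Set.Ioi 0) := by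
  rw [← Set.Ioc_union_Ioi_eq_Ioi (zero_le_one' ℝ)]
  apply MeasureTheory.IntegrableOn.union
  · exact (psi_cont b hb).integrableOn_Ioc
  · have := integrableOn_Ioi_rpow_of_lt (a := -(3/2)) (by norm_num) one_pos
    refine MeasureTheory.Integrable.mono this (psi_cont b hb).aestronglyMeasurable ?_
    refine (MeasureTheory.ae_restrict_mem measurableSet_Ioi).mono fun t ht => ?_
    simp only [Set.mem_Ioi] at ht
    rw [Real.norm_of_nonneg (psi_nonneg b t), Real.norm_of_nonneg (by positivity)]
    exact psi_le' b t hb (by linarith)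

lemma phi_deriv (p q t : ℝ) (ht : 0 < t) :
    HasDerivAt (fun t => p * √t - q / √t) ((p * (√t)⁻¹ + q * (t * √t)⁻¹)/2) t := by
  have hs : 0 < √t := Real.sqrt_pos.2 ht
  have h1 := Real.hasDerivAt_sqrt ht.ne'
  have h2 := (h1.const_mul p).sub ((h1.inv hs.ne').const_mul q)
  have hss : √t * √t = t := Real.mul_self_sqrt ht.le
  have e : p * (1 / (2 * √t)) - q * (-(1 / (2 * √t)) / √t ^ 2) = (p * (√t)⁻¹ + q * (t * √t)⁻¹)/2 := by
    rw [sq, hss]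
    field_simp
    ring
  rw [e] at h2
  refine h2.congr_of_eventuallyEq ?_
  exact Filter.Eventually.of_forall fun x => by simp [div_eq_mul_inv]

lemma phi_mono (p q : ℝ) (hp : 0 < p) (hq : 0 < q) :
    StrictMonoOn (fun t => p * √t - q / √t) (Set.Ioi 0) := by
  intro a ha b hb hab
  simp only [Set.mem_Ioi] at ha hb
  have h1 : √a < √b := Real.sqrt_lt_sqrt ha.le hab
  have h0 : 0 < √a := Real.sqrt_pos.2 ha
  simp only
  have : q / √b < q / √a := by gcongr
  nlinarith

lemma phi_image (p q : ℝ) (hp : 0 < p) (hq : 0 < q) :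
    (fun t => p * √t - q / √t) '' (Set.Ioi 0) = Set.univ := by
  rw [Set.eq_univ_iff_forall]
  intro v
  set D := √(v^2 + 4*p*q) with hD
  have hD2 : D * D = v^2 + 4*p*q := Real.mul_self_sqrt (by positivity)
  have hDv : |v| < D := by
    rw [hD]; apply Real.lt_sqrt_of_sq_lt; rw [sq_abs]; nlinarith [mul_pos hp hq]
  have hs : 0 < (v + D)/(2*p) := by
    have := neg_abs_le v
    apply div_pos <;> linarith
  refine ⟨((v + D)/(2*p))^2, by simp only [Set.mem_Ioi]; positivity, ?_⟩
  simp only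
  rw [Real.sqrt_sq hs.le]
  have hne : v + D ≠ 0 := by
    have := neg_abs_le v
    linarith
  field_simp
  nlinarith

lemma real_laplace (b r : ℝ) (hb : 0 < b) (hr : 0 < r) :
    ∫ t in Set.Ioi (0:ℝ), psi b t * Real.exp (-(r * t)) = √(π / b) * Real.exp (-(2 * √b * √r)) := by
  set p := √r with hp'
  set q := √b with hq'
  have hp : 0 < p := Real.sqrt_pos.2 hr
  have hq : 0 < q := Real.sqrt_pos.2 hb
  have hpp : p * p = r := Real.mul_self_sqrt hr.le
  have hqq : q * q = b := Real.mul_self_sqrt hb.le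
  set φ : ℝ → ℝ := fun t => p * √t - q / √t with hφ
  have hder : ∀ x ∈ Set.Ioi (0:ℝ), HasDerivWithinAt φ ((p * (√x)⁻¹ + q * (x * √x)⁻¹)/2) (Set.Ioi 0) x :=
    fun x hx => (phi_deriv p q x hx).hasDerivWithinAt
  have hpos : ∀ x ∈ Set.Ioi (0:ℝ), |(p * (√x)⁻¹ + q * (x * √x)⁻¹)/2| = (p * (√x)⁻¹ + q * (x * √x)⁻¹)/2 := by
    intro x hx
    simp only [Set.mem_Ioi] at hx
    exact abs_of_nonneg (by positivity)
  have hgi : MeasureTheory.Integrable (fun v : ℝ => Real.exp (-v^2)) := by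
    simpa using integrable_exp_neg_mul_sq (b := 1) one_pos
  have hI := MeasureTheory.integral_image_eq_integral_abs_deriv_smul measurableSet_Ioi hder
    (phi_mono p q hp hq).injOn (fun v => Real.exp (-v^2))
  have hInt := (MeasureTheory.integrableOn_image_iff_integrableOn_abs_deriv_smul measurableSet_Ioi hder
    (phi_mono p q hp hq).injOn (fun v => Real.exp (-v^2))).1 (by
      rw [phi_image p q hp hq]; exact hgi.integrableOn)
  rw [phi_image p q hp hq, MeasureTheory.setIntegral_univ] at hI
  have hG : ∫ v : ℝ, Real.exp (-v^2) = √π := by simpa using integral_gaussian 1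
  rw [hG] at hI
  -- two halves
  set A : ℝ → ℝ := fun t => p * (√t)⁻¹ * Real.exp (-(φ t)^2) with hA
  set B : ℝ → ℝ := fun t => q * (t * √t)⁻¹ * Real.exp (-(φ t)^2) with hB
  have hAB : ∀ t ∈ Set.Ioi (0:ℝ), |(p * (√t)⁻¹ + q * (t * √t)⁻¹)/2| • Real.exp (-(φ t)^2) = (A t + B t)/2 := by
    intro t ht
    rw [hpos t ht, smul_eq_mul]; simp only [hA, hB]; ring
  rw [MeasureTheory.setIntegral_congr_fun measurableSet_Ioi hAB] at hI
  have hInt2 : MeasureTheory.IntegrableOn (fun t => (A t + B t)/2) (Set.Ioi 0) :=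
    hInt.congr_fun hAB measurableSet_Ioi
  have hcφ : ContinuousOn φ (Set.Ioi 0) := fun x hx => (hder x hx).continuousWithinAt
  have hsne : ∀ x ∈ Set.Ioi (0:ℝ), √x ≠ 0 := fun x hx => (Real.sqrt_pos.2 hx).ne'
  have hAm : ContinuousOn A (Set.Ioi 0) := by
    apply ContinuousOn.mul
    · exact continuousOn_const.mul (Real.continuous_sqrt.continuousOn.inv₀ hsne)
    · exact Real.continuous_exp.comp_continuousOn (hcφ.pow 2).neg
  have hBm : ContinuousOn B (Set.Ioi 0) := by
    apply ContinuousOn.mul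
    · exact continuousOn_const.mul ((continuousOn_id.mul Real.continuous_sqrt.continuousOn).inv₀
        (fun x hx => mul_ne_zero (ne_of_gt hx) (hsne x hx)))
    · exact Real.continuous_exp.comp_continuousOn (hcφ.pow 2).neg
  have hAn : ∀ t ∈ Set.Ioi (0:ℝ), 0 ≤ A t := by
    intro t ht; simp only [Set.mem_Ioi] at ht; simp only [hA]; positivity
  have hBn : ∀ t ∈ Set.Ioi (0:ℝ), 0 ≤ B t := by
    intro t ht; simp only [Set.mem_Ioi] at ht; simp only [hB]; positivity
  have hIntThree := hInt2.const_mul 2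
  have hAi : MeasureTheory.IntegrableOn A (Set.Ioi 0) := by
    refine MeasureTheory.Integrable.mono hIntThree (hAm.aestronglyMeasurable measurableSet_Ioi) ?_
    refine (MeasureTheory.ae_restrict_mem measurableSet_Ioi).mono fun t ht => ?_
    have a := hAn t ht
    have b := hBn t ht
    rw [Real.norm_of_nonneg a, Real.norm_of_nonneg (by positivity)]
    linarith
  have hBi : MeasureTheory.IntegrableOn B (Set.Ioi 0) := by
    refine MeasureTheory.Integrable.mono hIntThree (hBm.aestronglyMeasurable measurableSet_Ioi) ?_
    refine (MeasureTheory.ae_restrict_mem measurableSet_Ioi).mono fun t ht => ?_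
    have a := hAn t ht
    have b := hBn t ht
    rw [Real.norm_of_nonneg b, Real.norm_of_nonneg (by positivity)]
    linarith
  have hEq : ∫ t in Set.Ioi (0:ℝ), A t = ∫ t in Set.Ioi (0:ℝ), B t := by
    have hκ : 0 < q^2/p^2 := by positivity
    have himg : (fun t : ℝ => (q^2/p^2) / t) '' (Set.Ioi 0) = Set.Ioi 0 := by
      ext x
      simp only [Set.mem_image, Set.mem_Ioi]
      constructor
      · rintro ⟨t, ht, rfl⟩; positivity
      · intro hx
        exact ⟨(q^2/p^2)/x, by positivity, by field_simp⟩
    have hd : ∀ x ∈ Set.Ioi (0:ℝ), HasDerivWithinAt (fun t : ℝ => (q^2/p^2) / t) (-((q^2/p^2) / x^2)) (Set.Ioi 0) x := by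
      intro x hx
      have := ((hasDerivAt_inv (ne_of_gt hx : x ≠ 0)).const_mul (q^2/p^2)).hasDerivWithinAt (s := Set.Ioi 0)
      have e : q^2/p^2 * (-(x^2)⁻¹) = -((q^2/p^2) / x^2) := by ring
      rw [e] at this
      exact this
    have hinj : Set.InjOn (fun t : ℝ => (q^2/p^2) / t) (Set.Ioi 0) := by
      intro a ha b hb hab
      simp only [Set.mem_Ioi] at ha hb
      simp only at hab
      have h1 : q^2/p^2 ≠ 0 := hκ.ne'
      field_simp at hab
      exact hab.symm
    have := MeasureTheory.integral_image_eq_integral_abs_deriv_smul measurableSet_Ioi hd hinj A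
    rw [himg] at this
    rw [this]
    apply MeasureTheory.setIntegral_congr_fun measurableSet_Ioi
    intro t ht
    simp only [Set.mem_Ioi] at ht
    have hs : 0 < √t := Real.sqrt_pos.2 ht
    have hss : √t * √t = t := Real.mul_self_sqrt ht.le
    have e1 : √((q^2/p^2)/t) = (q/p) / √t := by
      rw [← div_pow, Real.sqrt_div (by positivity), Real.sqrt_sq (by positivity)]
    have e2 : φ ((q^2/p^2)/t) = - φ t := by
      simp only [hφ, e1]; field_simp; ring
    simp only [smul_eq_mul, hA, hB, e2, neg_sq, e1]
    rw [abs_neg, abs_of_pos (by positivity)]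
    rw [← mul_assoc]
    congr 1
    have : t^2 = t * (√t * √t) := by rw [hss]; ring
    rw [this]
    field_simp
  rw [MeasureTheory.integral_div, MeasureTheory.integral_add hAi hBi, hEq] at hI
  have hfin : ∫ t in Set.Ioi (0:ℝ), psi b t * Real.exp (-(r * t)) = ∫ t in Set.Ioi (0:ℝ), (Real.exp (-(2*q*p)) / q) * B t := by
    apply MeasureTheory.setIntegral_congr_fun measurableSet_Ioi
    intro t ht
    simp only [Set.mem_Ioi] at ht
    have hs : 0 < √t := Real.sqrt_pos.2 ht
    have hss : √t * √t = t := Real.mul_self_sqrt ht.le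
    have e3 : -(b/t) + -(r*t) = -(2*q*p) + -(φ t)^2 := by
      have : φ t ^2 = p * p * t - 2 * (p * q) + q * q / t := by
        have : φ t ^ 2 = p * p * (√t * √t) - 2 * (p * q) + q * q / (√t * √t) := by
          simp only [hφ]; field_simp; ring
        rw [this, hss]
      rw [this, hpp, hqq]; ring
    simp only [psi, hB]
    rw [mul_assoc, ← Real.exp_add, e3, Real.exp_add]
    field_simp
  rw [hfin, MeasureTheory.integral_const_mul]
  have hBval : ∫ t in Set.Ioi (0:ℝ), B t = √π := by linarith
  rw [hBval, Real.sqrt_div Real.pi_pos.le]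
  ring

lemma psi_laplace_pos (b : ℝ) (hb : 0 < b) (c : ℂ) (hc : 0 < c.re) :
    ∫ t in Set.Ioi (0:ℝ), (psi b t : ℂ) * cexp (-(c * t)) =
      (√(π / b) : ℂ) * cexp (-(2 * (√b : ℂ) * c ^ (1/2 : ℂ))) := by
  refine halfplane_identity (fun c => ∫ t in Set.Ioi (0:ℝ), (psi b t : ℂ) * cexp (-(c * t)))
    (fun c => (√(π / b) : ℂ) * cexp (-(2 * (√b : ℂ) * c ^ (1/2 : ℂ)))) ?_ ?_ ?_ c hc
  · apply laplace_diff
    intro ε hε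
    refine MeasureTheory.Integrable.mono (psi_integrable b hb) ?_ ?_
    · apply Continuous.aestronglyMeasurable
      have := psi_cont b hb
      fun_prop
    · refine (MeasureTheory.ae_restrict_mem measurableSet_Ioi).mono fun t ht => ?_
      simp only [Set.mem_Ioi] at ht
      rw [norm_mul, Complex.norm_real, Complex.norm_exp]
      apply mul_le_of_le_one_right (norm_nonneg _)
      apply Real.exp_le_one_iff.2
      simp; positivity
  · intro z hz
    apply DifferentiableAt.differentiableWithinAt
    refine DifferentiableAt.const_mul ?_ _
    apply DifferentiableAt.cexp
    apply DifferentiableAt.fun_neg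
    refine DifferentiableAt.const_mul ?_ _
    apply DifferentiableAt.cpow_const differentiableAt_id
    left; exact hz
  · intro r hr
    have := real_laplace b r hb hr
    have h2 : ∫ t in Set.Ioi (0:ℝ), (psi b t : ℂ) * cexp (-((r:ℂ) * t)) = ((∫ t in Set.Ioi (0:ℝ), psi b t * Real.exp (-(r * t)) : ℝ) : ℂ) := by
      rw [← integral_complex_ofReal]
      congr 1
      ext t
      push_cast; rfl
    rw [h2, this]
    have h3 : (r:ℂ) ^ (1/2 : ℂ) = (√r : ℂ) := by
      rw [Real.sqrt_eq_rpow, Complex.ofReal_cpow hr.le]; push_cast; rfl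
    rw [h3]
    push_cast
    rfl

lemma psi_laplace (b : ℝ) (hb : 0 < b) (c : ℂ) (hc : 0 ≤ c.re) :
    ∫ t in Set.Ioi (0:ℝ), (psi b t : ℂ) * cexp (-(c * t)) =
      (√(π / b) : ℂ) * cexp (-(2 * (√b : ℂ) * c ^ (1/2 : ℂ))) := by
  have hl : Filter.Tendsto (fun ε : ℝ => c + (ε:ℂ)) (nhdsWithin 0 (Set.Ioi 0)) (nhds c) := by
    have : Continuous (fun ε : ℝ => c + (ε:ℂ)) := by fun_prop
    exact (this.tendsto' 0 c (by simp)).mono_left nhdsWithin_le_nhds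
  have t1 : Filter.Tendsto (fun ε : ℝ => ∫ t in Set.Ioi (0:ℝ), (psi b t : ℂ) * cexp (-((c + (ε:ℂ)) * t)))
      (nhdsWithin 0 (Set.Ioi 0)) (nhds (∫ t in Set.Ioi (0:ℝ), (psi b t : ℂ) * cexp (-(c * t)))) := by
    apply MeasureTheory.tendsto_integral_filter_of_dominated_convergence (psi b)
    · refine Filter.Eventually.of_forall fun ε => ?_
      apply Continuous.aestronglyMeasurable
      have := psi_cont b hb
      fun_prop
    · filter_upwards [self_mem_nhdsWithin] with ε hε
      refine (MeasureTheory.ae_restrict_mem measurableSet_Ioi).mono fun t ht => ?_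
      simp only [Set.mem_Ioi] at ht hε
      rw [norm_mul, Complex.norm_real, Complex.norm_exp, Real.norm_of_nonneg (psi_nonneg b t)]
      apply mul_le_of_le_one_right (psi_nonneg b t)
      apply Real.exp_le_one_iff.2
      simp; nlinarith [mul_nonneg hc ht.le, mul_pos hε ht]
    · exact psi_integrable b hb
    · refine Filter.Eventually.of_forall fun t => ?_
      have : Continuous (fun z : ℂ => (psi b t : ℂ) * cexp (-(z * t))) := by fun_prop
      exact (this.tendsto c).comp hl
  have t2 : Filter.Tendsto (fun ε : ℝ => (√(π / b) : ℂ) * cexp (-(2 * (√b : ℂ) * (c + (ε:ℂ)) ^ (1/2 : ℂ))))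
      (nhdsWithin 0 (Set.Ioi 0)) (nhds ((√(π / b) : ℂ) * cexp (-(2 * (√b : ℂ) * c ^ (1/2 : ℂ))))) := by
    have h1 : ContinuousAt (fun z : ℂ => z ^ (1/2:ℂ)) c :=
      Complex.continuousAt_cpow_const_of_re_pos (Or.inl hc) (by norm_num)
    have h2 := h1.tendsto.comp hl
    have h3 : Continuous (fun w : ℂ => (√(π / b) : ℂ) * cexp (-(2 * (√b : ℂ) * w))) := by fun_prop
    exact (h3.tendsto _).comp h2
  refine tendsto_nhds_unique t1 (t2.congr' ?_)
  filter_upwards [self_mem_nhdsWithin] with ε hε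
  simp only [Set.mem_Ioi] at hε
  exact (psi_laplace_pos b hb _ (by simp; linarith)).symm


noncomputable def YY (u : ℝ) : ℝ := 2 * π * √(2 * u)

noncomputable def ff (u : ℝ) : ℝ := Real.exp (-(YY u)) * Real.sin (π / 4 - YY u)

lemma ff_abs (u : ℝ) : |ff u| ≤ Real.exp (-(YY u)) := by
  unfold ff
  rw [abs_mul, abs_of_pos (Real.exp_pos _)]
  exact mul_le_of_le_one_right (Real.exp_pos _).le (Real.abs_sin_le_one _)

lemma YY_mul (j y : ℝ) (hj : 0 ≤ j) : YY (j * y) = YY y * √j := by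
  unfold YY
  rw [show 2 * (j * y) = j * (2 * y) by ring, Real.sqrt_mul hj]; ring

lemma YY_pos (y : ℝ) (hy : 0 < y) : 0 < YY y := by unfold YY; positivity

lemma YY_mono {x y : ℝ} (h : x ≤ y) : YY x ≤ YY y := by
  unfold YY; gcongr

lemma rpow_exp_sqrt_le (a c : ℝ) (hc : 0 < c) : ∃ C : ℝ, ∀ k : ℕ,
    ((k:ℝ)+1)^a * Real.exp (-(c * √((k:ℝ)+1))) ≤ C * ((k:ℝ)+1)^(-2:ℝ) := by
  obtain ⟨N, hN⟩ := exists_nat_ge (2 * (a + 2))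
  refine ⟨N.factorial / c ^ N, fun k => ?_⟩
  set t : ℝ := (k:ℝ)+1 with ht
  have ht1 : 1 ≤ t := by simp [ht]
  have ht0 : 0 < t := by linarith
  have h1 := Real.pow_div_factorial_le_exp (c * √t) (by positivity) N
  have h2 : t ^ (a + 2) ≤ (√t)^N := by
    rw [← Real.rpow_natCast, Real.sqrt_eq_rpow, ← Real.rpow_mul ht0.le]
    apply Real.rpow_le_rpow_of_exponent_le ht1
    linarith
  have h3 : t ^ a = t ^ (a+2) * t ^ (-2:ℝ) := by rw [← Real.rpow_add ht0]; congr 1; ring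
  rw [h3, Real.exp_neg, mul_right_comm]
  gcongr
  rw [mul_inv_le_iff₀ (Real.exp_pos _)]
  calc t ^ (a+2) ≤ (√t)^N := h2
    _ = N.factorial / c ^ N * ((c * √t)^N / N.factorial) := by
      have := Nat.factorial_ne_zero N
      rw [mul_pow]
      field_simp
    _ ≤ _ := by gcongr

lemma summable_rpow_exp_sqrt (a c : ℝ) (hc : 0 < c) :
    Summable fun k : ℕ => ((k:ℝ)+1)^a * Real.exp (-(c * √((k:ℝ)+1))) := by
  obtain ⟨C, hC⟩ := rpow_exp_sqrt_le a c hc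
  exact Summable.of_nonneg_of_le (fun k => by positivity) hC ((summable_shift_rpow (-2) (by norm_num)).mul_left C)

lemma summable_exp_sqrt (c : ℝ) (hc : 0 < c) :
    Summable fun k : ℕ => Real.exp (-(c * √((k:ℝ)+1))) := by
  simpa using summable_rpow_exp_sqrt 0 c hc

lemma psi_fourier (y : ℝ) (hy : 0 < y) (ξ : ℝ) :
    FourierTransform.fourier (fun t : ℝ => (psi (2 * π * y) t : ℂ)) ξ =
      (√(π / (2 * π * y)) : ℂ) * cexp (-(2 * (√(2 * π * y) : ℂ) * (2 * π * I * ξ) ^ (1/2 : ℂ))) := by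
  rw [Real.fourier_real_eq_integral_exp_smul]
  have e1 : ∫ v : ℝ, cexp (((-2 * π * v * ξ : ℝ) : ℂ) * I) • (psi (2 * π * y) v : ℂ) =
      ∫ v in Set.Ioi (0:ℝ), cexp (((-2 * π * v * ξ : ℝ) : ℂ) * I) • (psi (2 * π * y) v : ℂ) := by
    symm
    apply MeasureTheory.setIntegral_eq_integral_of_forall_compl_eq_zero
    intro t ht
    rw [psi_nonpos _ t (by simpa using ht)]; simp
  rw [e1, ← psi_laplace (2 * π * y) (by positivity) _ (by simp)]
  apply MeasureTheory.setIntegral_congr_fun measurableSet_Ioi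
  intro t ht
  simp only [smul_eq_mul]
  rw [mul_comm]
  congr 2
  push_cast; ring

lemma sqrt_two_sq : (√2 : ℂ) * √2 = 2 := by
  rw [← ofReal_mul, Real.mul_self_sqrt (by norm_num)]; simp

lemma I_half : (I : ℂ) ^ (1/2 : ℂ) = (1 + I) / √2 := by
  rw [cpow_def_of_ne_zero I_ne_zero, log_I]
  have : (π / 2 * I * (1/2) : ℂ) = ((π / 4 : ℝ) : ℂ) * I := by push_cast; ring
  rw [this, exp_mul_I, ← ofReal_cos, ← ofReal_sin, Real.cos_pi_div_four, Real.sin_pi_div_four]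
  have h := sqrt_two_sq
  have h0 : (√2 : ℂ) ≠ 0 := by simp
  push_cast
  field_simp
  linear_combination (1 + I) * h

lemma negI_half : (-I : ℂ) ^ (1/2 : ℂ) = (1 - I) / √2 := by
  rw [cpow_def_of_ne_zero (neg_ne_zero.2 I_ne_zero), log_neg_I]
  have : (-(π / 2) * I * (1/2) : ℂ) = ((-(π / 4) : ℝ) : ℂ) * I := by push_cast; ring
  rw [this, exp_mul_I, ← ofReal_cos, ← ofReal_sin, Real.cos_neg, Real.sin_neg, Real.cos_pi_div_four, Real.sin_pi_div_four]
  have h := sqrt_two_sq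
  have h0 : (√2 : ℂ) ≠ 0 := by simp
  push_cast
  field_simp
  linear_combination (1 - I) * h

lemma exponent_eq (y r : ℝ) (hy : 0 < y) (hr : 0 < r) (z : ℂ) :
    2 * (√(2 * π * y) : ℂ) * ((2 * π * r : ℝ) * z) ^ (1/2 : ℂ) = ((YY (r * y) * √2 : ℝ) : ℂ) * z ^ (1/2:ℂ) := by
  rw [rmul_cpow _ (by positivity)]
  have h3 : ((2 * π * r : ℝ):ℂ) ^ (1/2 : ℂ) = (√(2 * π * r) : ℂ) := by
      rw [Real.sqrt_eq_rpow, Complex.ofReal_cpow (by positivity)]; push_cast; rfl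
  rw [h3, ← mul_assoc]
  congr 1
  have : 2 * √(2 * π * y) * √(2 * π * r) = YY (r * y) * √2 := by
    unfold YY
    rw [mul_assoc 2 (√_), ← Real.sqrt_mul (by positivity), mul_assoc (2 * π) (√_), ← Real.sqrt_mul (by positivity) 2]
    rw [show 2 * π * y * (2 * π * r) = π^2 * (2 * (r * y) * 2) by ring, Real.sqrt_mul (by positivity), Real.sqrt_sq Real.pi_pos.le]
    ring
  exact_mod_cast congrArg (fun r : ℝ => (r:ℂ)) this

lemma psi_fourier_pos (y : ℝ) (hy : 0 < y) (k : ℕ) :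
    FourierTransform.fourier (fun t : ℝ => (psi (2 * π * y) t : ℂ)) ((k:ℝ)+1) =
      ((√(2*y))⁻¹ : ℝ) * cexp (-((YY (((k:ℝ)+1) * y) : ℝ) * (1 + I))) := by
  rw [psi_fourier y hy]
  have := exponent_eq y ((k:ℝ)+1) hy (by positivity) I
  rw [I_half] at this
  rw [show (2 * π * I * (((k:ℝ)+1 : ℝ):ℂ)) = ((2 * π * ((k:ℝ)+1) : ℝ) : ℂ) * I by push_cast; ring, this]
  have h0 : (√2 : ℂ) ≠ 0 := by simp
  congr 2
  · rw [show π / (2 * π * y) = (2*y)⁻¹ by field_simp, Real.sqrt_inv]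
  · push_cast; field_simp

lemma psi_fourier_neg (y : ℝ) (hy : 0 < y) (k : ℕ) :
    FourierTransform.fourier (fun t : ℝ => (psi (2 * π * y) t : ℂ)) (-((k:ℝ)+1)) =
      ((√(2*y))⁻¹ : ℝ) * cexp (-((YY (((k:ℝ)+1) * y) : ℝ) * (1 - I))) := by
  rw [psi_fourier y hy]
  have := exponent_eq y ((k:ℝ)+1) hy (by positivity) (-I)
  rw [negI_half] at this
  rw [show (2 * π * I * ((-((k:ℝ)+1) : ℝ):ℂ)) = ((2 * π * ((k:ℝ)+1) : ℝ) : ℂ) * (-I) by push_cast; ring, this]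
  have h0 : (√2 : ℂ) ≠ 0 := by simp
  congr 2
  · rw [show π / (2 * π * y) = (2*y)⁻¹ by field_simp, Real.sqrt_inv]
  · push_cast; field_simp

lemma psi_fourier_zero (y : ℝ) (hy : 0 < y) :
    FourierTransform.fourier (fun t : ℝ => (psi (2 * π * y) t : ℂ)) 0 = ((√(2*y))⁻¹ : ℝ) := by
  rw [psi_fourier y hy, show π / (2 * π * y) = (2*y)⁻¹ by field_simp, Real.sqrt_inv]
  simp

lemma psi_decay (b : ℝ) (hb : 0 < b) : (fun t : ℝ => (psi b t : ℂ)) =O[Filter.cocompact ℝ] fun x : ℝ => |x| ^ (-(3/2:ℝ)) := by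
  apply Asymptotics.IsBigO.of_bound 1
  refine Filter.Eventually.of_forall fun t => ?_
  rw [Complex.norm_real, Real.norm_of_nonneg (psi_nonneg b t), Real.norm_of_nonneg (by positivity), one_mul]
  rcases le_or_gt t 0 with h | h
  · rw [psi_nonpos b t h]; positivity
  · rw [abs_of_pos h]; exact psi_le' b t hb h

lemma fourier_norm_aux (y : ℝ) (hy : 0 < y) (k : ℕ) (z : ℂ) (hz : z.re = 1) :
    ‖(((√(2*y))⁻¹ : ℝ):ℂ) * cexp (-((YY (((k:ℝ)+1) * y) : ℝ) * z))‖ ≤ (√(2*y))⁻¹ * Real.exp (-(YY y * √((k:ℝ)+1))) := by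
  rw [norm_mul, Complex.norm_real, Real.norm_of_nonneg (by positivity), Complex.norm_exp, ← YY_mul _ _ (by positivity)]
  simp [hz]

lemma W_identity (y : ℝ) (hy : 0 < y) :
    ∑' d : ℕ, psi (2 * π * y) ((d:ℝ)+1) =
      (√(2*y))⁻¹ * (1 + 2 * ∑' k : ℕ, Real.exp (-(YY (((k:ℝ)+1) * y))) * Real.cos (YY (((k:ℝ)+1) * y))) := by
  have hb : 0 < 2 * π * y := by positivity
  have hE := (summable_exp_sqrt (YY y) (YY_pos y hy)).mul_left (√(2*y))⁻¹
  have hs1 : Summable fun k : ℕ => (((√(2*y))⁻¹ : ℝ):ℂ) * cexp (-((YY (((k:ℝ)+1) * y) : ℝ) * (1 + I))) :=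
    Summable.of_norm_bounded hE fun k => fourier_norm_aux y hy k _ (by simp)
  have hs2 : Summable fun k : ℕ => (((√(2*y))⁻¹ : ℝ):ℂ) * cexp (-((YY (((k:ℝ)+1) * y) : ℝ) * (1 - I))) :=
    Summable.of_norm_bounded hE fun k => fourier_norm_aux y hy k _ (by simp)
  set F : ℝ → ℂ := FourierTransform.fourier (fun t : ℝ => (psi (2 * π * y) t : ℂ)) with hF
  have hf1 : ∀ k : ℕ, F (((k:ℤ)+1 : ℤ):ℝ) = (((√(2*y))⁻¹ : ℝ):ℂ) * cexp (-((YY (((k:ℝ)+1) * y) : ℝ) * (1 + I))) := by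
    intro k; rw [← psi_fourier_pos y hy]; push_cast; rfl
  have hf2 : ∀ k : ℕ, F ((-((k:ℤ)+1) : ℤ):ℝ) = (((√(2*y))⁻¹ : ℝ):ℂ) * cexp (-((YY (((k:ℝ)+1) * y) : ℝ) * (1 - I))) := by
    intro k; rw [← psi_fourier_neg y hy]; push_cast; rfl
  have g1 : Summable fun k : ℕ => F (((k:ℤ)+1 : ℤ):ℝ) := by simpa only [hf1] using hs1
  have g2 : Summable fun k : ℕ => F ((-((k:ℤ)+1) : ℤ):ℝ) := by simpa only [hf2] using hs2
  have hFs : Summable (fun n : ℤ => F (n:ℝ)) := Summable.of_add_one_of_neg_add_one g1 g2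
  have hP := Real.tsum_eq_tsum_fourier_of_rpow_decay_of_summable
    (f := fun t : ℝ => (psi (2 * π * y) t : ℂ)) (by have := psi_cont _ hb; fun_prop)
    (by norm_num : (1:ℝ) < 3/2) (psi_decay _ hb) hFs 0
  rw [← hF] at hP
  simp only [zero_add, QuotientAddGroup.mk_zero, fourier_eval_zero, mul_one] at hP
  rw [tsum_int_pos _ (fun n hn => by rw [psi_nonpos _ _ (by exact_mod_cast hn)]; simp),
    tsum_of_add_one_of_neg_add_one (f := fun n : ℤ => F (n:ℝ)) g1 g2] at hP
  simp only [hf1, hf2] at hP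
  have h0 : F ((0:ℤ):ℝ) = ((√(2*y))⁻¹ : ℝ) := by
    rw [← psi_fourier_zero y hy]; simp [hF]
  rw [h0, add_right_comm, ← hs1.tsum_add hs2] at hP
  have h5 : ∀ k : ℕ, (((√(2*y))⁻¹ : ℝ):ℂ) * cexp (-((YY (((k:ℝ)+1) * y) : ℝ) * (1 + I))) + (((√(2*y))⁻¹ : ℝ):ℂ) * cexp (-((YY (((k:ℝ)+1) * y) : ℝ) * (1 - I))) =
     (((√(2*y))⁻¹ * (2 * (Real.exp (-(YY (((k:ℝ)+1) * y))) * Real.cos (YY (((k:ℝ)+1) * y)))) : ℝ) : ℂ) := by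
    intro k
    set Y := YY (((k:ℝ)+1) * y)
    rw [← mul_add, show -((Y:ℂ) * (1 + I)) = -Y + (-Y) * I by ring, show -((Y:ℂ) * (1 - I)) = -Y + (Y) * I by ring,
      Complex.exp_add, Complex.exp_add, ← mul_add]
    push_cast
    rw [Complex.cos]
    ring_nf
  simp only [h5] at hP
  have h6 : ∑' d : ℕ, psi (2 * π * y) ((d:ℝ)+1) = ∑' k : ℕ, ((√(2*y))⁻¹ * (2 * (Real.exp (-(YY (((k:ℝ)+1) * y))) * Real.cos (YY (((k:ℝ)+1) * y))))) + (√(2*y))⁻¹ := by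
    apply Complex.ofReal_injective
    push_cast
    push_cast at hP
    exact hP
  rw [h6, tsum_mul_left, tsum_mul_left]
  ring


noncomputable def zt (n : ℕ) (s : ℂ) : ℂ :=
  (s - 1) * ((n:ℂ)+1)^(-s) + (((n:ℂ)+2)^(1-s) - ((n:ℂ)+1)^(1-s))

lemma real_cpow_deriv (c : ℂ) (t : ℝ) (ht : 0 < t) :
    HasDerivAt (fun t : ℝ => (t:ℂ)^c) (c * (t:ℂ)^(c-1)) t := by
  have h : HasDerivAt (fun z : ℂ => z^c) (c * (t:ℂ)^(c-1) * 1) (t:ℂ) :=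
    (hasDerivAt_id (t:ℂ)).cpow_const (Or.inl (by simpa using ht))
  rw [mul_one] at h
  exact h.comp_ofReal

lemma zt_bound (n : ℕ) (s : ℂ) (hs : 0 < s.re) :
    ‖zt n s‖ ≤ ‖s - 1‖ * (‖s‖ * ((n:ℝ)+1)^(-s.re-1)) := by
  set a : ℝ := (n:ℝ)+1 with ha
  have ha0 : 0 < a := by positivity
  have h1 : ∀ t ∈ Set.Icc a (a+1), ‖(t:ℂ)^(-s) - (a:ℂ)^(-s)‖ ≤ ‖s‖ * a^(-s.re-1) := by
    intro t ht
    have := (convex_Icc a (a+1)).norm_image_sub_le_of_norm_hasDerivWithin_le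
      (f := fun t : ℝ => (t:ℂ)^(-s)) (f' := fun t : ℝ => -s * (t:ℂ)^(-s-1)) (C := ‖s‖ * a^(-s.re-1))
      (x := a) (y := t) (fun u hu => (real_cpow_deriv (-s) u (lt_of_lt_of_le ha0 hu.1)).hasDerivWithinAt) (fun u hu => by
        have hu0 : 0 < u := lt_of_lt_of_le ha0 hu.1
        rw [norm_mul, norm_neg, norm_cpow_eq_rpow_re_of_pos hu0]
        gcongr
        simp only [sub_re, neg_re, one_re]
        exact Real.rpow_le_rpow_of_nonpos ha0 hu.1 (by linarith)) (by simp) ht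
    refine this.trans ?_
    apply mul_le_of_le_one_right (by positivity)
    rw [Real.norm_of_nonneg (by linarith [ht.1])]
    linarith [ht.2]
  have h2 := (convex_Icc a (a+1)).norm_image_sub_le_of_norm_hasDerivWithin_le
      (f := fun t : ℝ => (s-1) * (a:ℂ)^(-s) * (t:ℂ) + (t:ℂ)^(1-s))
      (f' := fun t : ℝ => (s-1) * (a:ℂ)^(-s) * 1 + (1-s) * (t:ℂ)^(1-s-1)) (C := ‖s-1‖ * (‖s‖ * a^(-s.re-1)))
      (x := a) (y := a+1) (fun u hu => by
        have hu0 : 0 < u := lt_of_lt_of_le ha0 hu.1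
        apply HasDerivAt.hasDerivWithinAt
        apply HasDerivAt.add
        · exact (Complex.ofRealCLM.hasDerivAt (x := u)).const_mul _
        · exact real_cpow_deriv _ u hu0) (fun u hu => by
        have : (s-1) * (a:ℂ)^(-s) * 1 + (1-s) * (u:ℂ)^(1-s-1) = -((s-1) * ((u:ℂ)^(-s) - (a:ℂ)^(-s))) := by
          rw [show 1 - s - 1 = -s by ring]; ring
        rw [this, norm_neg, norm_mul]
        gcongr
        exact h1 u hu) (by simp) (by simp)
  have h3 : zt n s = ((s-1) * (a:ℂ)^(-s) * ((a+1 : ℝ):ℂ) + ((a+1:ℝ):ℂ)^(1-s)) - ((s-1) * (a:ℂ)^(-s) * (a:ℂ) + (a:ℂ)^(1-s)) := by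
    unfold zt
    have e1 : (a:ℂ) = (n:ℂ)+1 := by rw [ha]; push_cast; rfl
    have e2 : ((a+1:ℝ):ℂ) = (n:ℂ)+2 := by rw [ha]; push_cast; ring
    rw [e2, e1]
    ring
  rw [h3]
  simpa using h2

lemma zt_diff (n : ℕ) : Differentiable ℂ (zt n) := by
  have e1 : ((n:ℂ)+1) ≠ 0 := by exact_mod_cast Nat.succ_ne_zero n
  have e2 : ((n:ℂ)+2) ≠ 0 := by exact_mod_cast (by omega : n + 2 ≠ 0)
  intro s
  unfold zt
  apply DifferentiableAt.add
  · apply DifferentiableAt.mul (by fun_prop)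
    exact DifferentiableAt.const_cpow (by fun_prop) (Or.inl e1)
  · apply DifferentiableAt.sub
    · exact DifferentiableAt.const_cpow (by fun_prop) (Or.inl e2)
    · exact DifferentiableAt.const_cpow (by fun_prop) (Or.inl e1)

lemma zt_summable (s : ℂ) (hs : 0 < s.re) : Summable fun n => zt n s :=
  Summable.of_norm_bounded (((summable_shift_rpow (-s.re-1) (by linarith)).mul_left _).mul_left _) fun n => zt_bound n s hs

lemma zt_tsum_diff : DifferentiableOn ℂ (fun s => ∑' n, zt n s) {s | 0 < s.re} := by
  intro s₀ hs₀
  have hs₀' : 0 < s₀.re := hs₀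
  set V : Set ℂ := {s | s₀.re/2 < s.re} ∩ Metric.ball 0 (‖s₀‖+1) with hV
  have hVo : IsOpen V := (isOpen_lt continuous_const Complex.continuous_re).inter Metric.isOpen_ball
  have hmem : s₀ ∈ V := ⟨by show s₀.re/2 < s₀.re; linarith, by simp⟩
  have := Complex.differentiableOn_tsum_of_summable_norm (F := zt)
    (((summable_shift_rpow (-(s₀.re/2)-1) (by linarith)).mul_left (‖s₀‖+1)).mul_left (‖s₀‖+2))
    (fun n => (zt_diff n).differentiableOn) hVo (fun n s hs => by
      have h1 : s₀.re/2 < s.re := hs.1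
      have h2 : ‖s‖ < ‖s₀‖+1 := by simpa using hs.2
      refine (zt_bound n s (by linarith)).trans ?_
      have h3 : ‖s - 1‖ ≤ ‖s₀‖+2 := by
        calc ‖s-1‖ ≤ ‖s‖ + ‖(1:ℂ)‖ := norm_sub_le _ _
          _ ≤ _ := by rw [norm_one]; linarith
      gcongr
      simp)
  exact ((this s₀ hmem).differentiableAt (hVo.mem_nhds hmem)).differentiableWithinAt

lemma zt_zeta_one (s : ℂ) (hs : 1 < s.re) : ∑' n, zt n s + 1 = (s - 1) * riemannZeta s := by
  have h1 : Summable fun n : ℕ => ((n:ℂ)+1)^(-s) := by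
    refine Summable.of_norm_bounded (summable_shift_rpow (-s.re) (by linarith)) fun n => ?_
    have := norm_cpow_eq_rpow_re_of_pos (by positivity : (0:ℝ) < (n:ℝ)+1) (-s)
    push_cast at this
    rw [this]; simp
  have hz : ∑' n : ℕ, ((n:ℂ)+1)^(-s) = riemannZeta s := by
    rw [zeta_eq_tsum_one_div_nat_add_one_cpow hs]
    apply tsum_congr; intro n
    rw [cpow_neg, one_div]
  have h2 : Summable fun n : ℕ => (((n:ℂ)+2)^(1-s) - ((n:ℂ)+1)^(1-s)) := by
    have := (zt_summable s (by linarith)).sub (h1.mul_left (s-1))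
    refine this.congr fun n => ?_
    unfold zt; ring
  have h3 : ∑' n : ℕ, (((n:ℂ)+2)^(1-s) - ((n:ℂ)+1)^(1-s)) = -1 := by
    refine tendsto_nhds_unique h2.hasSum.tendsto_sum_nat ?_
    have e : ∀ N : ℕ, ∑ n ∈ range N, (((n:ℂ)+2)^(1-s) - ((n:ℂ)+1)^(1-s)) = ((N:ℂ)+1)^(1-s) - 1 := by
      intro N
      have := Finset.sum_range_sub (fun n : ℕ => ((n:ℂ)+1)^(1-s)) N
      simp only [Nat.cast_zero, zero_add, one_cpow] at this
      rw [← this]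
      apply Finset.sum_congr rfl
      intro n _
      push_cast; ring_nf
    simp only [e]
    have : Filter.Tendsto (fun N : ℕ => ((N:ℂ)+1)^(1-s)) Filter.atTop (nhds 0) := by
      rw [tendsto_zero_iff_norm_tendsto_zero]
      have e2 : ∀ N : ℕ, ‖((N:ℂ)+1)^(1-s)‖ = (((N+1:ℕ):ℝ))^(-(s.re-1)) := by
        intro N
        have := norm_cpow_eq_rpow_re_of_pos (by positivity : (0:ℝ) < (N:ℝ)+1) (1-s)
        push_cast at this ⊢
        rw [this]; simp
      simp only [e2]
      exact (tendsto_rpow_neg_atTop (by linarith : 0 < s.re - 1)).comp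
        (tendsto_natCast_atTop_atTop.comp (Filter.tendsto_add_atTop_nat 1))
    simpa using this.sub_const 1
  unfold zt
  rw [(h1.mul_left (s-1)).tsum_add h2, h3, tsum_mul_left, hz]
  ring

lemma zt_zeta (s : ℂ) (hs : 0 < s.re) (hs1 : s ≠ 1) : ∑' n, zt n s + 1 = (s - 1) * riemannZeta s := by
  set U : Set ℂ := {s | 0 < s.re} with hU
  have hUo : IsOpen U := isOpen_lt continuous_const Complex.continuous_re
  have hUc : Convex ℝ U := convex_halfSpace_re_gt 0
  have hz : ∀ s : ℂ, s ≠ 1 → riemannZeta₁ s = (s - 1) * riemannZeta s := by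
    intro s hs
    rw [riemannZeta_eq_inv_sub_mul hs, ← mul_assoc, mul_inv_cancel₀ (sub_ne_zero.2 hs), one_mul]
  have := (AnalyticOnNhd.eqOn_of_preconnected_of_eventuallyEq (f := fun s => ∑' n, zt n s + 1)
    (g := riemannZeta₁) (U := U) (z₀ := 2)
    ((zt_tsum_diff.add_const 1).analyticOnNhd hUo)
    (differentiable_riemannZeta₁.differentiableOn.analyticOnNhd hUo) hUc.isPreconnected
    (by simp [hU]) (by
      have : {s : ℂ | 1 < s.re} ∈ nhds (2:ℂ) :=
        (isOpen_lt continuous_const Complex.continuous_re).mem_nhds (by simp)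
      filter_upwards [this] with s hs
      have hs' : 1 < s.re := hs
      rw [zt_zeta_one s hs, hz s]
      rintro rfl; simp at hs')) hs
  rw [← hz s hs1]; exact this

noncomputable def zr (n : ℕ) : ℝ := (√((n:ℝ)+1))⁻¹ - 2 * (√((n:ℝ)+1+1) - √((n:ℝ)+1))

lemma half_cpow (r : ℝ) (hr : 0 ≤ r) : (r:ℂ)^(1/2:ℂ) = (√r : ℂ) := by
  rw [Real.sqrt_eq_rpow, Complex.ofReal_cpow hr]; push_cast; rfl

lemma zeta_half : riemannZeta (1/2) = ((∑' n, zr n - 2 : ℝ) : ℂ) := by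
  have h := zt_zeta (1/2) (by simp) (by norm_num)
  have e : ∀ n, zt n (1/2) = ((-(1/2) * zr n : ℝ):ℂ) := by
    intro n
    unfold zt zr
    rw [show (1 - 1/2 : ℂ) = 1/2 by norm_num, cpow_neg]
    have h1 := half_cpow ((n:ℝ)+1) (by positivity)
    have h2 := half_cpow ((n:ℝ)+1+1) (by positivity)
    rw [show (n:ℂ)+2 = (((n:ℝ)+1+1 : ℝ):ℂ) by push_cast; ring, h2,
      show (n:ℂ)+1 = (((n:ℝ)+1 : ℝ):ℂ) by push_cast; ring, h1]
    push_cast; ring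
  simp only [e] at h
  rw [← Complex.ofReal_tsum, tsum_mul_left] at h
  push_cast at h ⊢
  linear_combination 2 * h


noncomputable def SS (y : ℝ) : ℝ := ∑' d : ℕ, (√((d:ℝ)+1))⁻¹ * (Real.exp (-(2 * π * y / ((d:ℝ)+1))) - 1)

noncomputable def Phi (y : ℝ) : ℝ := ∑' j : ℕ, (√((j:ℝ)+1))⁻¹ * ff (((j:ℝ)+1) * y)

lemma SS_term_bound (d : ℕ) (y : ℝ) (hy : 0 ≤ y) :
    |(√((d:ℝ)+1))⁻¹ * (Real.exp (-(2 * π * y / ((d:ℝ)+1))) - 1)| ≤ 2 * π * y * ((d:ℝ)+1)^(-(3/2):ℝ) := by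
  set t : ℝ := (d:ℝ)+1 with ht
  have ht0 : 0 < t := by positivity
  have h1 : Real.exp (-(2 * π * y / t)) ≤ 1 := Real.exp_le_one_iff.2 (by simp; positivity)
  have h2 := Real.add_one_le_exp (-(2 * π * y / t))
  have e : t^(-(3/2):ℝ) = (√t)⁻¹ * t⁻¹ := by
    rw [Real.sqrt_eq_rpow, ← Real.rpow_neg ht0.le, ← Real.rpow_neg_one t, ← Real.rpow_add ht0]; norm_num
  rw [abs_mul, abs_of_pos (by positivity : 0 < (√t)⁻¹), e, abs_of_nonpos (by linarith)]
  calc (√t)⁻¹ * -(Real.exp (-(2 * π * y / t)) - 1) ≤ (√t)⁻¹ * (2 * π * y / t) := by gcongr; linarith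
    _ = _ := by ring

lemma SS_summable (y : ℝ) (hy : 0 ≤ y) :
    Summable fun d : ℕ => (√((d:ℝ)+1))⁻¹ * (Real.exp (-(2 * π * y / ((d:ℝ)+1))) - 1) :=
  Summable.of_norm_bounded ((summable_shift_rpow (-(3/2)) (by norm_num)).mul_left _) fun d => SS_term_bound d y hy

lemma SS_tendsto : Filter.Tendsto SS (nhdsWithin 0 (Set.Ioi 0)) (nhds 0) := by
  have hb : ∀ y : ℝ, 0 ≤ y → ‖SS y‖ ≤ (∑' d : ℕ, ((d:ℝ)+1)^(-(3/2):ℝ)) * (2 * π * y) := by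
    intro y hy
    have : ‖SS y‖ ≤ _ := tsum_of_norm_bounded ((summable_shift_rpow (-(3/2)) (by norm_num)).mul_left (2 * π * y)).hasSum
      (fun d => SS_term_bound d y hy)
    rw [tsum_mul_left, mul_comm] at this
    exact this
  refine squeeze_zero_norm' (Filter.eventually_of_mem self_mem_nhdsWithin fun y hy => hb y (le_of_lt hy)) ?_
  have : Continuous (fun y : ℝ => (∑' d : ℕ, ((d:ℝ)+1)^(-(3/2):ℝ)) * (2 * π * y)) := by fun_prop
  exact (this.tendsto' 0 0 (by simp)).mono_left nhdsWithin_le_nhds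

lemma SS_deriv (y : ℝ) (hy : 0 < y) :
    HasDerivAt SS (-(2 * π) * ∑' d : ℕ, psi (2 * π * y) ((d:ℝ)+1)) y := by
  rw [← tsum_mul_left]
  refine hasDerivAt_tsum_of_isPreconnected (t := Set.Ioi 0) (y₀ := 1)
    ((summable_shift_rpow (-(3/2)) (by norm_num)).mul_left (2 * π)) isOpen_Ioi isPreconnected_Ioi
    (g := fun (d:ℕ) y => (√((d:ℝ)+1))⁻¹ * (Real.exp (-(2 * π * y / ((d:ℝ)+1))) - 1))
    (g' := fun (d:ℕ) y => -(2 * π) * psi (2 * π * y) ((d:ℝ)+1)) ?_ ?_ (by simp) (SS_summable 1 (by norm_num)) hy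
  · intro d u hu
    have h1 : HasDerivAt (fun y : ℝ => -(2 * π * y / ((d:ℝ)+1))) (-(2 * π * 1 / ((d:ℝ)+1))) u :=
      (((hasDerivAt_id u).const_mul (2*π)).div_const _).neg
    have h2 := ((h1.exp).sub_const 1).const_mul (√((d:ℝ)+1))⁻¹
    refine HasDerivAt.congr_deriv h2 (Eq.symm ?_)
    unfold psi
    rw [mul_inv]; ring
  · intro d u hu
    have hu0 : 0 < u := hu
    rw [norm_mul, norm_neg, Real.norm_of_nonneg (by positivity), Real.norm_of_nonneg (psi_nonneg _ _)]
    gcongr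
    exact psi_le' _ _ (by positivity) (by positivity)

lemma YY_deriv (u : ℝ) (hu : 0 < u) : HasDerivAt YY (2 * π * (√(2*u))⁻¹) u := by
  have h1 : HasDerivAt (fun u : ℝ => √(2*u)) ((2*1)/(2 * √(2*u))) u :=
    ((hasDerivAt_id u).const_mul 2).sqrt (by simp; exact hu.ne')
  have h2 := h1.const_mul (2 * π)
  refine HasDerivAt.congr_deriv h2 (Eq.symm ?_)
  have : √(2*u) ≠ 0 := by positivity
  field_simp

lemma sincos (Y : ℝ) : Real.sin (π/4 - Y) + Real.cos (π/4 - Y) = √2 * Real.cos Y := by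
  rw [Real.sin_sub, Real.cos_sub, Real.sin_pi_div_four, Real.cos_pi_div_four]; ring

lemma ff_deriv (u : ℝ) (hu : 0 < u) :
    HasDerivAt ff (-(2 * π * (√u)⁻¹ * (Real.exp (-(YY u)) * Real.cos (YY u)))) u := by
  have h1 := YY_deriv u hu
  have h2 := (h1.neg.exp).mul ((h1.const_sub (π/4)).sin)
  refine HasDerivAt.congr_deriv h2 (Eq.symm ?_)
  have h3 := sincos (YY u)
  have h4 : √(2*u) = √2 * √u := Real.sqrt_mul (by norm_num) _
  have h5 : √2 ≠ 0 := by positivity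
  have h6 : √u ≠ 0 := by positivity
  simp only [Pi.neg_apply]
  have : Real.cos (YY u) = (Real.sin (π/4 - YY u) + Real.cos (π/4 - YY u)) / √2 := by
    rw [h3]; field_simp
  rw [this, h4]
  field_simp
  ring

lemma Phi_norm (j : ℕ) (y : ℝ) : ‖(√((j:ℝ)+1))⁻¹ * ff (((j:ℝ)+1) * y)‖ ≤ Real.exp (-(YY y * √((j:ℝ)+1))) := by
  rw [norm_mul, Real.norm_of_nonneg (by positivity), ← YY_mul _ _ (by positivity)]
  calc (√((j:ℝ)+1))⁻¹ * ‖ff (((j:ℝ)+1) * y)‖ ≤ 1 * Real.exp (-YY (((j:ℝ)+1) * y)) := by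
        gcongr
        · apply inv_le_one_of_one_le₀
          rw [Real.one_le_sqrt]; simp
        · exact ff_abs _
    _ = _ := by rw [one_mul]

lemma Phi_summable (y : ℝ) (hy : 0 < y) : Summable fun j : ℕ => (√((j:ℝ)+1))⁻¹ * ff (((j:ℝ)+1) * y) :=
  Summable.of_norm_bounded (summable_exp_sqrt _ (YY_pos y hy)) fun j => Phi_norm j y

lemma Phi_deriv (y : ℝ) (hy : 0 < y) :
    HasDerivAt Phi (-(2 * π) * (√y)⁻¹ * ∑' k : ℕ, Real.exp (-(YY (((k:ℝ)+1) * y))) * Real.cos (YY (((k:ℝ)+1) * y))) y := by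
  rw [← tsum_mul_left]
  have hy2 : y / 2 < y := by linarith
  have hy20 : 0 < y / 2 := by linarith
  refine hasDerivAt_tsum_of_isPreconnected (t := Set.Ioi (y/2)) (y₀ := y)
    ((summable_exp_sqrt _ (YY_pos (y/2) hy20)).mul_left (2 * π * (√(y/2))⁻¹)) isOpen_Ioi isPreconnected_Ioi
    (g := fun (j:ℕ) y => (√((j:ℝ)+1))⁻¹ * ff (((j:ℝ)+1) * y))
    (g' := fun (k:ℕ) y => -(2 * π) * (√y)⁻¹ * (Real.exp (-(YY (((k:ℝ)+1) * y))) * Real.cos (YY (((k:ℝ)+1) * y))))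
    ?_ ?_ hy2 (Phi_summable y hy) hy2
  · intro k u hu
    have hu0 : 0 < u := lt_trans hy20 hu
    have hk : (0:ℝ) < (k:ℝ)+1 := by positivity
    have h1 : HasDerivAt (fun u : ℝ => ((k:ℝ)+1) * u) (((k:ℝ)+1)*1) u := (hasDerivAt_id u).const_mul _
    have h2 := ((ff_deriv (((k:ℝ)+1) * u) (by positivity)).comp u h1).const_mul (√((k:ℝ)+1))⁻¹
    refine HasDerivAt.congr_deriv h2 (Eq.symm ?_)
    rw [Real.sqrt_mul hk.le]
    have h3 : ((k:ℝ)+1) * 1 = √((k:ℝ)+1) * √((k:ℝ)+1) := by rw [Real.mul_self_sqrt hk.le, mul_one]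
    have h4 : √((k:ℝ)+1) ≠ 0 := by positivity
    have h6 : √u ≠ 0 := by positivity
    rw [h3]
    field_simp
  · intro k u hu
    have hu0 : 0 < u := lt_trans hy20 hu
    have hu' : y/2 < u := hu
    rw [norm_mul, norm_mul, norm_mul, norm_neg, Real.norm_of_nonneg (by positivity), Real.norm_of_nonneg (by positivity),
      Real.norm_of_nonneg (Real.exp_pos _).le, ← YY_mul _ _ (by positivity)]
    have : Real.exp (-YY (((k:ℝ)+1) * u)) * ‖Real.cos (YY (((k:ℝ)+1) * u))‖ ≤ Real.exp (-YY (((k:ℝ)+1) * (y/2))) * 1 := by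
      gcongr
      · exact YY_mono (by gcongr)
      · exact Real.abs_cos_le_one _
    rw [mul_one] at this
    gcongr

lemma S_const : ∃ c : ℝ, ∀ y : ℝ, 0 < y → SS y + YY y - √2 * Phi y = c := by
  have hd : ∀ y : ℝ, 0 < y → HasDerivAt (fun y => SS y + YY y - √2 * Phi y) 0 y := by
    intro y hy
    have h := ((SS_deriv y hy).add (YY_deriv y hy)).sub ((Phi_deriv y hy).const_mul (√2))
    refine HasDerivAt.congr_deriv h (Eq.symm ?_)
    rw [W_identity y hy, Real.sqrt_mul (by norm_num)]
    generalize (∑' k : ℕ, Real.exp (-(YY (((k:ℝ)+1) * y))) * Real.cos (YY (((k:ℝ)+1) * y))) = T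
    have h2 : √2 * √2 = 2 := Real.mul_self_sqrt (by norm_num)
    have h5 : √2 ≠ 0 := by positivity
    have h6 : √y ≠ 0 := by positivity
    field_simp
    rw [show √2 ^ 2 = 2 by rw [sq, h2]]
    ring
  exact isOpen_Ioi.exists_is_const_of_deriv_eq_zero (s := Set.Ioi (0:ℝ)) isPreconnected_Ioi
    (fun y hy => (hd y hy).differentiableAt.differentiableWithinAt) (fun y hy => (hd y hy).deriv)


noncomputable def gA (a t : ℝ) : ℝ := (√t)⁻¹ * (Real.exp (-(a * √t)) * Real.sin (π / 4 - a * √t))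
noncomputable def PA (a t : ℝ) : ℝ := √2 / a * (Real.exp (-(a * √t)) * Real.sin (a * √t))

lemma asqrt_deriv (a t : ℝ) (ht : 0 < t) : HasDerivAt (fun t : ℝ => a * √t) (a * (1 / (2 * √t))) t :=
  (Real.hasDerivAt_sqrt ht.ne').const_mul a

lemma PA_deriv (a t : ℝ) (ha : 0 < a) (ht : 0 < t) : HasDerivAt (PA a) (gA a t) t := by
  have h1 := asqrt_deriv a t ht
  have h2 := ((h1.neg.exp).mul h1.sin).const_mul (√2 / a)
  refine HasDerivAt.congr_deriv h2 ?_
  have h5 : √2 * √2 = 2 := Real.mul_self_sqrt (by norm_num)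
  have h6 : √t ≠ 0 := by positivity
  unfold gA
  rw [Real.sin_sub, Real.sin_pi_div_four, Real.cos_pi_div_four]
  simp only [Pi.neg_apply]
  field_simp
  ring

lemma gA_deriv (a t : ℝ) (ht : 0 < t) : HasDerivAt (gA a)
    (-((t * √t)⁻¹ * (1/2) * (Real.exp (-(a * √t)) * Real.sin (π / 4 - a * √t)))
      - (t * √t)⁻¹ * (√2 / 2) * ((a * √t) * Real.exp (-(a * √t))) * Real.cos (a * √t)) t := by
  have h1 := asqrt_deriv a t ht
  have h6 : √t ≠ 0 := by positivity
  have h2 := ((Real.hasDerivAt_sqrt ht.ne').inv h6).mul ((h1.neg.exp).mul ((h1.const_sub (π/4)).sin))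
  refine HasDerivAt.congr_deriv h2 ?_
  have h3 := sincos (a * √t)
  have h7 : √t * √t = t := Real.mul_self_sqrt ht.le
  simp only [Pi.neg_apply, Pi.inv_apply, Pi.mul_apply]
  have h8 : Real.cos (π / 4 - a * √t) = √2 * Real.cos (a * √t) - Real.sin (π / 4 - a * √t) := by linarith
  rw [h8]
  set w := √t
  rw [← h7]
  field_simp
  ring

lemma gA_deriv_bound (a t : ℝ) (ha : 0 < a) (ht : 0 < t) :
    |(-((t * √t)⁻¹ * (1/2) * (Real.exp (-(a * √t)) * Real.sin (π / 4 - a * √t)))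
      - (t * √t)⁻¹ * (√2 / 2) * ((a * √t) * Real.exp (-(a * √t))) * Real.cos (a * √t))| ≤ 2 * t^(-(3/2):ℝ) := by
  have e : t^(-(3/2):ℝ) = (t * √t)⁻¹ := by
    rw [mul_inv, Real.sqrt_eq_rpow, ← Real.rpow_neg ht.le, ← Real.rpow_neg_one t, ← Real.rpow_add ht]; norm_num
  rw [e]
  set z := a * √t
  have hz : 0 ≤ z := by positivity
  set q := (t * √t)⁻¹ with hq
  have hq0 : 0 ≤ q := by positivity
  have h1 : |q * (1/2) * (Real.exp (-z) * Real.sin (π/4 - z))| ≤ q * (1/2) * (1 * 1) := by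
    rw [abs_mul, abs_mul, abs_mul, abs_of_nonneg hq0, abs_of_pos (by norm_num : (0:ℝ) < 1/2), abs_of_pos (Real.exp_pos _)]
    gcongr
    · exact Real.exp_le_one_iff.2 (by linarith)
    · exact Real.abs_sin_le_one _
  have h2 : z * Real.exp (-z) ≤ 1 := by
    rw [Real.exp_neg, mul_inv_le_iff₀ (Real.exp_pos _)]
    linarith [Real.add_one_le_exp z]
  have h3 : |q * (√2/2) * (z * Real.exp (-z)) * Real.cos z| ≤ q * (√2/2) * 1 * 1 := by
    rw [abs_mul, abs_of_nonneg (by positivity : 0 ≤ q * (√2/2) * (z * Real.exp (-z)))]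
    gcongr
    exact Real.abs_cos_le_one _
  have h4 : √2 ≤ 2 := by rw [Real.sqrt_le_left (by norm_num)]; norm_num
  calc _ ≤ |-(q * (1/2) * (Real.exp (-z) * Real.sin (π/4 - z)))| + |q * (√2/2) * (z * Real.exp (-z)) * Real.cos z| := abs_sub _ _
    _ ≤ q * (1/2) * (1*1) + q * (√2/2) * 1 * 1 := by rw [abs_neg]; gcongr
    _ ≤ 2 * q := by nlinarith

lemma gA_diff (a t : ℝ) (ha : 0 < a) (ht : 0 < t) :
    |gA a t - (PA a (t+1) - PA a t)| ≤ 2 * t^(-(3/2):ℝ) := by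
  have hbd : ∀ u ∈ Set.Icc t (t+1), |gA a u - gA a t| ≤ 2 * t^(-(3/2):ℝ) := by
    intro u hu
    have := (convex_Icc t (t+1)).norm_image_sub_le_of_norm_hasDerivWithin_le
      (f := gA a) (C := 2 * t^(-(3/2):ℝ)) (x := t) (y := u)
      (fun v hv => (gA_deriv a v (lt_of_lt_of_le ht hv.1)).hasDerivWithinAt) (fun v hv => by
        have hv0 := lt_of_lt_of_le ht hv.1
        refine (gA_deriv_bound a v ha hv0).trans ?_
        gcongr 2 * ?_
        exact Real.rpow_le_rpow_of_nonpos ht hv.1 (by norm_num)) (by simp) hu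
    refine le_trans this ?_
    apply mul_le_of_le_one_right (by positivity)
    rw [Real.norm_of_nonneg (by linarith [hu.1])]
    linarith [hu.2]
  obtain ⟨c, hc, hc'⟩ := exists_hasDerivAt_eq_slope (PA a) (gA a) (by linarith : t < t+1)
    (fun v hv => (PA_deriv a v ha (lt_of_lt_of_le ht hv.1)).continuousAt.continuousWithinAt)
    (fun v hv => PA_deriv a v ha (lt_trans ht hv.1))
  have : PA a (t+1) - PA a t = gA a c := by rw [hc']; simp
  rw [this, abs_sub_comm]
  exact hbd c ⟨hc.1.le, hc.2.le⟩

lemma Phi_gA (y : ℝ) : Phi y = ∑' j : ℕ, gA (YY y) ((j:ℝ)+1) := by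
  unfold Phi gA ff
  apply tsum_congr; intro j
  rw [YY_mul _ _ (by positivity)]

lemma gA_summable (a : ℝ) (ha : 0 < a) : Summable fun j : ℕ => gA a ((j:ℝ)+1) := by
  refine Summable.of_norm_bounded (summable_exp_sqrt a ha) fun j => ?_
  unfold gA
  rw [norm_mul, norm_mul, Real.norm_of_nonneg (by positivity), Real.norm_of_nonneg (Real.exp_pos _).le]
  calc _ ≤ 1 * (Real.exp (-(a * √((j:ℝ)+1))) * 1) := by
        gcongr
        · apply inv_le_one_of_one_le₀
          rw [Real.one_le_sqrt]; simp
        · exact Real.abs_sin_le_one _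
    _ = _ := by ring

lemma PA_sum (a : ℝ) (ha : 0 < a) : HasSum (fun j : ℕ => PA a ((j:ℝ)+1+1) - PA a ((j:ℝ)+1)) (-PA a 1) := by
  have hs : Summable (fun j : ℕ => PA a ((j:ℝ)+1+1) - PA a ((j:ℝ)+1)) := by
    have h1 : Summable fun j : ℕ => gA a ((j:ℝ)+1) - (PA a ((j:ℝ)+1+1) - PA a ((j:ℝ)+1)) :=
      Summable.of_norm_bounded ((summable_shift_rpow (-(3/2)) (by norm_num)).mul_left 2)
        fun j => gA_diff a _ ha (by positivity)
    refine ((gA_summable a ha).sub h1).congr fun j => by ring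
  have : ∑' j : ℕ, (PA a ((j:ℝ)+1+1) - PA a ((j:ℝ)+1)) = -PA a 1 := by
    refine tendsto_nhds_unique hs.hasSum.tendsto_sum_nat ?_
    have e : ∀ N : ℕ, ∑ j ∈ range N, (PA a ((j:ℝ)+1+1) - PA a ((j:ℝ)+1)) = PA a ((N:ℝ)+1) - PA a 1 := by
      intro N
      have := Finset.sum_range_sub (fun n : ℕ => PA a ((n:ℝ)+1)) N
      simp only [Nat.cast_zero, zero_add] at this
      rw [← this]
      apply Finset.sum_congr rfl
      intro n _
      push_cast; rfl
    simp only [e]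
    have : Filter.Tendsto (fun N : ℕ => PA a ((N:ℝ)+1)) Filter.atTop (nhds 0) := by
      have h0 := ((summable_exp_sqrt a ha).tendsto_atTop_zero).const_mul (√2 / a)
      rw [mul_zero] at h0
      refine squeeze_zero_norm (fun N => ?_) h0
      unfold PA
      rw [norm_mul, norm_mul, Real.norm_of_nonneg (by positivity), Real.norm_of_nonneg (Real.exp_pos _).le]
      gcongr
      exact mul_le_of_le_one_right (Real.exp_pos _).le (Real.abs_sin_le_one _)
    simpa using this.sub_const (PA a 1)
  rw [← this]; exact hs.hasSum

lemma PA_tendsto (t : ℝ) :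
    Filter.Tendsto (fun a => PA a t) (nhdsWithin 0 (Set.Ioi 0)) (nhds (√2 * √t)) := by
  have h1 : Filter.Tendsto (fun a : ℝ => a⁻¹ * Real.sin (a * √t)) (nhdsWithin 0 (Set.Ioi 0)) (nhds (√t)) := by
    have hd : HasDerivAt (fun a : ℝ => Real.sin (a * √t)) (√t) 0 := by
      have : HasDerivAt (fun a : ℝ => a * √t) (1 * √t) 0 := (hasDerivAt_id 0).mul_const _
      simpa using this.sin
    have := hd.tendsto_slope_zero_right
    simpa using this
  have h2 : Filter.Tendsto (fun a : ℝ => √2 * Real.exp (-(a * √t))) (nhdsWithin 0 (Set.Ioi 0)) (nhds √2) := by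
    have : Continuous (fun a : ℝ => √2 * Real.exp (-(a * √t))) := by fun_prop
    exact (this.tendsto' 0 _ (by simp)).mono_left nhdsWithin_le_nhds
  refine (h2.mul h1).congr fun a => ?_
  unfold PA; ring

lemma gA_tendsto (t : ℝ) :
    Filter.Tendsto (fun a => gA a t) (nhdsWithin 0 (Set.Ioi 0)) (nhds ((√t)⁻¹ * (√2/2))) := by
  have : Continuous (fun a => gA a t) := by unfold gA; fun_prop
  exact (this.tendsto' 0 _ (by simp [gA])).mono_left nhdsWithin_le_nhds

lemma Phi_lim : Filter.Tendsto (fun a => √2 * ∑' j : ℕ, gA a ((j:ℝ)+1)) (nhdsWithin 0 (Set.Ioi 0))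
    (nhds (∑' n, zr n - 2)) := by
  have h1 : Filter.Tendsto (fun a => ∑' j : ℕ, (gA a ((j:ℝ)+1) - (PA a ((j:ℝ)+1+1) - PA a ((j:ℝ)+1))))
      (nhdsWithin 0 (Set.Ioi 0)) (nhds (∑' n, (√2/2) * zr n)) := by
    apply tendsto_tsum_of_dominated_convergence
      (bound := fun j : ℕ => 2 * ((j:ℝ)+1)^(-(3/2):ℝ))
      ((summable_shift_rpow (-(3/2)) (by norm_num)).mul_left 2)
    · intro j
      have := (gA_tendsto ((j:ℝ)+1)).sub ((PA_tendsto ((j:ℝ)+1+1)).sub (PA_tendsto ((j:ℝ)+1)))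
      convert this using 2
      unfold zr
      have h5 : √2 * √2 = 2 := Real.mul_self_sqrt (by norm_num)
      ring
    · filter_upwards [self_mem_nhdsWithin] with a ha j
      exact gA_diff a _ ha (by positivity)
  have h2 := ((h1.sub (PA_tendsto 1)).const_mul (√2))
  have h5 : √2 * √2 = 2 := Real.mul_self_sqrt (by norm_num)
  have e : √2 * (∑' n, (√2/2) * zr n - √2 * √1) = ∑' n, zr n - 2 := by
    rw [tsum_mul_left, Real.sqrt_one]
    linear_combination (1/2 * (∑' n, zr n) - 1) * h5
  rw [e] at h2
  refine h2.congr' ?_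
  filter_upwards [self_mem_nhdsWithin] with a ha
  have ha0 : 0 < a := ha
  rw [((gA_summable a ha0).tsum_sub (PA_sum a ha0).summable), (PA_sum a ha0).tsum_eq]
  ring

lemma YY_tendsto : Filter.Tendsto YY (nhdsWithin 0 (Set.Ioi 0)) (nhdsWithin 0 (Set.Ioi 0)) := by
  apply tendsto_nhdsWithin_of_tendsto_nhds_of_eventually_within
  · have : Continuous YY := by unfold YY; fun_prop
    exact (this.tendsto' 0 0 (by simp [YY])).mono_left nhdsWithin_le_nhds
  · filter_upwards [self_mem_nhdsWithin] with y hy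
    exact YY_pos y hy

/-- Lemma 1. -/
lemma S_identity (y : ℝ) (hy : 0 < y) :
    (SS y : ℂ) + riemannZeta (1/2) = -(YY y : ℂ) + (√2 : ℂ) * (Phi y : ℂ) := by
  obtain ⟨c, hc⟩ := S_const
  have h1 : Filter.Tendsto (fun y => SS y + YY y - √2 * Phi y) (nhdsWithin 0 (Set.Ioi 0)) (nhds (0 + 0 - (∑' n, zr n - 2))) := by
    apply Filter.Tendsto.sub
    · exact SS_tendsto.add (YY_tendsto.mono_right nhdsWithin_le_nhds)
    · simp only [Phi_gA]
      exact Phi_lim.comp YY_tendsto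
  have h2 : Filter.Tendsto (fun y => SS y + YY y - √2 * Phi y) (nhdsWithin 0 (Set.Ioi 0)) (nhds c) := by
    refine tendsto_const_nhds.congr' ?_
    filter_upwards [self_mem_nhdsWithin] with y hy
    exact (hc y hy).symm
  have h3 := tendsto_nhds_unique h1 h2
  have h4 := hc y hy
  rw [zeta_half]
  have : SS y + (∑' n, zr n - 2) = -YY y + √2 * Phi y := by linarith
  exact_mod_cast congrArg (fun r : ℝ => (r:ℂ)) this


lemma nat_cpow_norm (k : ℕ) (z : ℂ) : ‖((k:ℂ)+1)^z‖ = ((k:ℝ)+1)^z.re := by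
  have : ((k:ℂ)+1) = (((k:ℝ)+1 : ℝ) : ℂ) := by push_cast; rfl
  rw [this, norm_cpow_eq_rpow_re_of_pos (by positivity)]

lemma nat_ne (k : ℕ) : ((k:ℂ)+1) ≠ 0 := by exact_mod_cast Nat.succ_ne_zero k

lemma zeta_shift (z : ℂ) (hz : z.re < -1) : HasSum (fun k : ℕ => ((k:ℂ)+1)^z) (riemannZeta (-z)) := by
  have h1 : Summable fun n : ℕ => ((n:ℂ)+1)^z :=
    Summable.of_norm_bounded (summable_shift_rpow z.re hz) fun n => (nat_cpow_norm n z).le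
  have : ∑' n : ℕ, ((n:ℂ)+1)^z = riemannZeta (-z) := by
    rw [zeta_eq_tsum_one_div_nat_add_one_cpow (by simp; linarith)]
    apply tsum_congr; intro n
    rw [cpow_neg, one_div, inv_inv]
  rw [← this]; exact h1.hasSum

lemma one_le_sqrt_nat (k : ℕ) : 1 ≤ √((k:ℝ)+1) := by rw [Real.one_le_sqrt]; simp

lemma double_bound (x : ℝ) (hx : 0 < x) (j k : ℕ) :
    |(√((j:ℝ)+1))⁻¹ * ff (((j:ℝ)+1) * (((k:ℝ)+1) * x))| ≤
      Real.exp (-(YY x / 2 * √((k:ℝ)+1))) * Real.exp (-(YY x / 2 * √((j:ℝ)+1))) := by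
  refine (Phi_norm j _).trans ?_
  rw [← Real.exp_add, YY_mul _ _ (by positivity)]
  apply Real.exp_le_exp.2
  have h1 := one_le_sqrt_nat j
  have h2 := one_le_sqrt_nat k
  have h3 := YY_pos x hx
  have h4 : (√((k:ℝ)+1) + √((j:ℝ)+1))/2 ≤ √((k:ℝ)+1) * √((j:ℝ)+1) := by nlinarith
  have := mul_le_mul_of_nonneg_left h4 h3.le
  nlinarith

lemma Phi_bound (x : ℝ) (hx : 0 < x) (k : ℕ) :
    |Phi (((k:ℝ)+1) * x)| ≤ Real.exp (-(YY x / 2 * √((k:ℝ)+1))) * ∑' j : ℕ, Real.exp (-(YY x / 2 * √((j:ℝ)+1))) := by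
  rw [← tsum_mul_left]
  exact tsum_of_norm_bounded (f := fun j : ℕ => (√((j:ℝ)+1))⁻¹ * ff (((j:ℝ)+1) * (((k:ℝ)+1) * x)))
    (((summable_exp_sqrt (YY x / 2) (by have := YY_pos x hx; positivity)).mul_left _).hasSum) (fun j => double_bound x hx j k)

lemma rhs_summable (x : ℝ) (hx : 0 < x) (ν : ℂ) :
    Summable fun k : ℕ => ((k:ℂ)+1)^(ν-1) * ((√2:ℂ) * (Phi (((k:ℝ)+1) * x) : ℂ)) := by
  have hY := YY_pos x hx
  refine Summable.of_norm_bounded ((summable_rpow_exp_sqrt (ν.re-1) (YY x / 2) (by positivity)).mul_right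
    (√2 * ∑' j : ℕ, Real.exp (-(YY x / 2 * √((j:ℝ)+1))))) fun k => ?_
  rw [norm_mul, nat_cpow_norm, norm_mul, Complex.norm_real, Complex.norm_real, Real.norm_of_nonneg (by positivity)]
  have := Phi_bound x hx k
  calc _ ≤ ((k:ℝ)+1)^(ν.re-1) * (√2 * (Real.exp (-(YY x / 2 * √((k:ℝ)+1))) * ∑' j : ℕ, Real.exp (-(YY x / 2 * √((j:ℝ)+1))))) := by
        gcongr
        · simp
        · simp
        · exact this
    _ = _ := by ring

lemma rhs_diff (x : ℝ) (hx : 0 < x) : Differentiable ℂ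
    (fun ν : ℂ => ∑' k : ℕ, ((k:ℂ)+1)^(ν-1) * ((√2:ℂ) * (Phi (((k:ℝ)+1) * x) : ℂ))) := by
  intro ν₀
  have hY := YY_pos x hx
  have hs := (summable_rpow_exp_sqrt (ν₀.re) (YY x / 2) (by positivity)).mul_right
    (√2 * ∑' j : ℕ, Real.exp (-(YY x / 2 * √((j:ℝ)+1))))
  have ho : IsOpen {ν : ℂ | ν.re < ν₀.re + 1} := isOpen_lt Complex.continuous_re continuous_const
  have := Complex.differentiableOn_tsum_of_summable_norm (U := {ν : ℂ | ν.re < ν₀.re + 1})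
    (F := fun (k:ℕ) (ν:ℂ) => ((k:ℂ)+1)^(ν-1) * ((√2:ℂ) * (Phi (((k:ℝ)+1) * x) : ℂ))) hs ?_ ho ?_
  · exact this.differentiableAt (ho.mem_nhds (by simp))
  · intro k ν _
    apply DifferentiableAt.differentiableWithinAt
    apply DifferentiableAt.mul_const
    apply DifferentiableAt.const_cpow (by fun_prop)
    left; exact nat_ne k
  · intro k ν hν
    have hν' : ν.re < ν₀.re + 1 := hν
    rw [norm_mul, nat_cpow_norm, norm_mul, Complex.norm_real, Complex.norm_real, Real.norm_of_nonneg (by positivity)]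
    have := Phi_bound x hx k
    calc _ ≤ ((k:ℝ)+1)^(ν₀.re) * (√2 * (Real.exp (-(YY x / 2 * √((k:ℝ)+1))) * ∑' j : ℕ, Real.exp (-(YY x / 2 * √((j:ℝ)+1))))) := by
          have h3 : ((k:ℝ)+1)^(ν-1).re ≤ ((k:ℝ)+1)^(ν₀.re) := by
            apply Real.rpow_le_rpow_of_exponent_le (by simp)
            rw [sub_re, one_re]; linarith
          have h4 : ‖Phi (((k:ℝ)+1) * x)‖ ≤ _ := this
          gcongr
      _ = _ := by ring

lemma rpow_three_half (d : ℕ) : (√((d:ℝ)+1))⁻¹ * ((d:ℝ)+1)⁻¹ = ((d:ℝ)+1)^(-(3/2):ℝ) := by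
  have ht0 : (0:ℝ) < (d:ℝ)+1 := by positivity
  rw [Real.sqrt_eq_rpow, ← Real.rpow_neg ht0.le, ← Real.rpow_neg_one ((d:ℝ)+1), ← Real.rpow_add ht0]; norm_num

lemma lhs_diff (x : ℝ) (hx : 0 < x) : DifferentiableOn ℂ
    (fun ν : ℂ => ∑' d : ℕ, (((√((d:ℝ)+1))⁻¹ : ℝ) : ℂ) * Rf ν (x / ((d:ℝ)+1))) UU := by
  intro ν₀ hν₀
  obtain ⟨V, hVo, hmem, hVU, C, hC⟩ := Rf_bound ν₀ hν₀ x
  have := Complex.differentiableOn_tsum_of_summable_norm (U := V)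
    (F := fun (d:ℕ) (ν:ℂ) => (((√((d:ℝ)+1))⁻¹ : ℝ) : ℂ) * Rf ν (x / ((d:ℝ)+1)))
    ((summable_shift_rpow (-(3/2)) (by norm_num)).mul_left (C * x)) ?_ hVo ?_
  · exact (this.differentiableAt (hVo.mem_nhds hmem)).differentiableWithinAt
  · intro d
    exact ((Rf_diff (x / ((d:ℝ)+1)) (by positivity)).mono hVU).const_mul _
  · intro d ν hν
    rw [norm_mul, Complex.norm_real, Real.norm_of_nonneg (by positivity), ← rpow_three_half]
    have := hC ν hν (x / ((d:ℝ)+1)) (by positivity) (div_le_self hx.le (by simp))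
    calc _ ≤ (√((d:ℝ)+1))⁻¹ * (C * (x / ((d:ℝ)+1))) := by gcongr
      _ = _ := by ring

lemma exp_sub_one_bound (u θ : ℝ) (hu : 0 < u) (h0 : 0 ≤ θ) (h1 : θ ≤ 1) :
    |Real.exp (-u) - 1| ≤ u ^ θ := by
  have e1 : Real.exp (-u) ≤ 1 := Real.exp_le_one_iff.2 (by linarith)
  have e2 := Real.add_one_le_exp (-u)
  have e3 := Real.exp_pos (-u)
  rw [abs_of_nonpos (by linarith)]
  rcases le_or_gt u 1 with h | h
  · have : u ^ (1:ℝ) ≤ u ^ θ := Real.rpow_le_rpow_of_exponent_ge hu h h1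
    rw [Real.rpow_one] at this
    linarith
  · have : 1 ≤ u ^ θ := Real.one_le_rpow h.le h0
    linarith

noncomputable def dt (x : ℝ) (ν : ℂ) (d k : ℕ) : ℂ :=
  (((√((d:ℝ)+1))⁻¹ : ℝ) : ℂ) * (((k:ℂ)+1)^(ν-1) * ((Real.exp (-(2 * π * (((k:ℝ)+1) * x) / ((d:ℝ)+1))) - 1 : ℝ) : ℂ))

lemma dt_summable (x : ℝ) (hx : 0 < x) (ν : ℂ) (h1 : -1 < ν.re) (h2 : ν.re < -1/2) :
    Summable (Function.uncurry (dt x ν)) := by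
  set θ : ℝ := (1/2 - ν.re)/2 with hθ
  have a := (summable_shift_rpow (-(1/2) - θ) (by linarith)).mul_of_nonneg
    (summable_shift_rpow (ν.re - 1 + θ) (by linarith)) (fun _ => by positivity) (fun _ => by positivity)
  refine Summable.of_norm_bounded (a.mul_left ((2 * π * x)^θ)) fun p => ?_
  obtain ⟨d, k⟩ := p
  simp only [Function.uncurry, dt]
  rw [norm_mul, norm_mul, nat_cpow_norm, Complex.norm_real, Complex.norm_real, Real.norm_of_nonneg (by positivity)]
  have hd : (0:ℝ) < (d:ℝ)+1 := by positivity
  have hk : (0:ℝ) < (k:ℝ)+1 := by positivity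
  have b := exp_sub_one_bound (2 * π * (((k:ℝ)+1) * x) / ((d:ℝ)+1)) θ (by positivity) (by linarith) (by linarith)
  have e1 : (2 * π * (((k:ℝ)+1) * x) / ((d:ℝ)+1))^θ = (2 * π * x)^θ * ((k:ℝ)+1)^θ * ((d:ℝ)+1)^(-θ) := by
    rw [Real.rpow_neg hd.le, ← div_eq_mul_inv, ← Real.mul_rpow (by positivity) hk.le, ← Real.div_rpow (by positivity) hd.le]
    congr 1; ring
  have e2 : (√((d:ℝ)+1))⁻¹ = ((d:ℝ)+1)^(-(1/2):ℝ) := by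
    rw [Real.sqrt_eq_rpow, ← Real.rpow_neg hd.le]
  rw [e1] at b
  calc _ ≤ ((d:ℝ)+1)^(-(1/2):ℝ) * (((k:ℝ)+1)^(ν.re-1) * ((2 * π * x)^θ * ((k:ℝ)+1)^θ * ((d:ℝ)+1)^(-θ))) := by
        rw [e2]
        gcongr
        · simp
        · simp
        · exact b
    _ = _ := by
        rw [sub_eq_add_neg (-(1/2):ℝ) θ, Real.rpow_add hd, Real.rpow_add hk]; ring

lemma Rf_left (x : ℝ) (hx : 0 < x) (ν : ℂ) (h1 : -1 < ν.re) (h2 : ν.re < -1/2) (d : ℕ) :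
    (((√((d:ℝ)+1))⁻¹ : ℝ) : ℂ) * Rf ν (x / ((d:ℝ)+1)) =
      ∑' k, dt x ν d k - Gamma ν * (2 * π : ℂ)^(-ν) * (x:ℂ)^(-ν) * ((d:ℂ)+1)^(ν-1/2) := by
  have hd : (0:ℝ) < (d:ℝ)+1 := by positivity
  have hz := zeta_shift (ν-1) (by simp; linarith)
  rw [neg_sub] at hz
  have hs : Summable fun k : ℕ => ((k:ℂ)+1) ^ (ν - 1) * cexp (-((2 * π * (x / ((d:ℝ)+1)) * ((k:ℝ)+1) : ℝ) : ℂ)) := by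
    refine Summable.of_norm_bounded (summable_shift_rpow (ν.re-1) (by linarith)) fun k => ?_
    rw [norm_mul, nat_cpow_norm, ← ofReal_neg, ← ofReal_exp, Complex.norm_real, Real.norm_of_nonneg (Real.exp_pos _).le]
    apply mul_le_of_le_one_right (by positivity)
    apply Real.exp_le_one_iff.2
    simp only [Left.neg_nonpos_iff]; positivity
  unfold Rf
  rw [← hz.tsum_eq, sub_right_comm, ← hs.tsum_sub hz.summable, mul_sub, ← tsum_mul_left]
  congr 1
  · apply tsum_congr; intro k
    unfold dt
    congr 1
    rw [← ofReal_neg, ← ofReal_exp, show 2 * π * (x / ((d:ℝ)+1)) * ((k:ℝ)+1) = 2 * π * (((k:ℝ)+1) * x) / ((d:ℝ)+1) by ring]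
    push_cast; ring
  · have e1 : ((x / ((d:ℝ)+1) : ℝ) : ℂ)^(-ν) = (x:ℂ)^(-ν) * ((d:ℂ)+1)^ν := by
      rw [div_eq_mul_inv, ofReal_mul, rmul_cpow x hx, ofReal_inv, inv_cpow _ _ (by
        rw [arg_ofReal_of_nonneg hd.le]; exact Real.pi_pos.ne), cpow_neg _ ν, cpow_neg _ ν, inv_inv]
      push_cast; rfl
    have e2 : (((√((d:ℝ)+1))⁻¹ : ℝ) : ℂ) = ((d:ℂ)+1)^(-(1/2):ℂ) := by
      have := half_cpow ((d:ℝ)+1) hd.le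
      push_cast at this ⊢
      rw [cpow_neg, this]
    rw [e1, e2, show ν - 1/2 = -(1/2) + ν by ring, cpow_add _ _ (nat_ne d)]
    ring

lemma lemma2_left (x : ℝ) (hx : 0 < x) (ν : ℂ) (h1 : -1 < ν.re) (h2 : ν.re < -1/2) :
    (∑' d : ℕ, (((√((d:ℝ)+1))⁻¹ : ℝ) : ℂ) * Rf ν (x / ((d:ℝ)+1)))
      + Gamma ν * (2 * π : ℂ)^(-ν) * (x:ℂ)^(-ν) * riemannZeta (1/2 - ν) + riemannZeta (1/2) * riemannZeta (1-ν)
    = (∑' k : ℕ, ((k:ℂ)+1)^(ν-1) * ((√2:ℂ) * (Phi (((k:ℝ)+1) * x) : ℂ))) - (YY x : ℂ) * riemannZeta (1/2-ν) := by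
  have hz := zeta_shift (ν-1) (by simp; linarith)
  rw [neg_sub] at hz
  have hz2 := zeta_shift (ν-1/2) (by simp; linarith)
  rw [neg_sub] at hz2
  have hdt := dt_summable x hx ν h1 h2
  simp only [Rf_left x hx ν h1 h2]
  have hd1 : Summable fun d => ∑' k, dt x ν d k := hdt.prod
  rw [hd1.tsum_sub (hz2.summable.mul_left _), tsum_mul_left, hz2.tsum_eq, ← hdt.tsum_comm]
  have hin : ∀ k, ∑' d, dt x ν d k = ((k:ℂ)+1)^(ν-1) * (SS (((k:ℝ)+1) * x) : ℂ) := by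
    intro k
    unfold SS
    rw [ofReal_tsum, ← tsum_mul_left]
    apply tsum_congr; intro d
    unfold dt; push_cast; ring
  have hS : ∀ k : ℕ, ((k:ℂ)+1)^(ν-1) * (SS (((k:ℝ)+1) * x) : ℂ) =
      ((k:ℂ)+1)^(ν-1) * ((√2:ℂ) * (Phi (((k:ℝ)+1) * x) : ℂ)) - (YY x : ℂ) * ((k:ℂ)+1)^(ν-1/2)
        - riemannZeta (1/2) * ((k:ℂ)+1)^(ν-1) := by
    intro k
    have := S_identity (((k:ℝ)+1) * x) (by positivity)
    have e : (SS (((k:ℝ)+1) * x) : ℂ) = -(YY (((k:ℝ)+1) * x) : ℂ) + (√2:ℂ) * (Phi (((k:ℝ)+1) * x) : ℂ) - riemannZeta (1/2) := by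
      linear_combination this
    have e2 : ((√((k:ℝ)+1) : ℝ) : ℂ) = ((k:ℂ)+1)^(1/2:ℂ) := by
      have := half_cpow ((k:ℝ)+1) (by positivity)
      push_cast at this ⊢
      rw [this]
    rw [e, YY_mul _ _ (by positivity), ofReal_mul, e2, show ν - 1/2 = (ν-1) + 1/2 by ring, cpow_add _ _ (nat_ne k)]
    ring
  simp only [hin, hS]
  rw [((rhs_summable x hx ν).sub (hz2.summable.mul_left _)).tsum_sub (hz.summable.mul_left _),
    (rhs_summable x hx ν).tsum_sub (hz2.summable.mul_left _), tsum_mul_left, tsum_mul_left, hz.tsum_eq, hz2.tsum_eq]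
  ring

lemma lemma2 (x : ℝ) (hx : 0 < x) (ν : ℂ) (hν : ν ∈ UU) :
    (∑' d : ℕ, (((√((d:ℝ)+1))⁻¹ : ℝ) : ℂ) * Rf ν (x / ((d:ℝ)+1)))
      + Gamma ν * (2 * π : ℂ)^(-ν) * (x:ℂ)^(-ν) * riemannZeta (1/2 - ν) + riemannZeta (1/2) * riemannZeta (1-ν)
    = (∑' k : ℕ, ((k:ℂ)+1)^(ν-1) * ((√2:ℂ) * (Phi (((k:ℝ)+1) * x) : ℂ))) - (YY x : ℂ) * riemannZeta (1/2-ν) := by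
  have hz1 : ∀ w ∈ UU, DifferentiableAt ℂ (fun ν => riemannZeta (1/2 - ν)) w := by
    intro w hw
    refine DifferentiableAt.comp w (g := riemannZeta) (differentiableAt_riemannZeta ?_) (by fun_prop)
    intro h
    exact hw.2.2 (by linear_combination -h)
  have hz2 : ∀ w ∈ UU, DifferentiableAt ℂ (fun ν => riemannZeta (1 - ν)) w := by
    intro w hw
    refine DifferentiableAt.comp w (g := riemannZeta) (differentiableAt_riemannZeta ?_) (by fun_prop)
    intro h
    exact hw.2.1 (by linear_combination -h)
  have hL : DifferentiableOn ℂ (fun ν => (∑' d : ℕ, (((√((d:ℝ)+1))⁻¹ : ℝ) : ℂ) * Rf ν (x / ((d:ℝ)+1)))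
      + Gamma ν * (2 * π : ℂ)^(-ν) * (x:ℂ)^(-ν) * riemannZeta (1/2 - ν) + riemannZeta (1/2) * riemannZeta (1-ν)) UU := by
    apply DifferentiableOn.fun_add
    · apply DifferentiableOn.fun_add (lhs_diff x hx)
      intro w hw
      apply DifferentiableAt.differentiableWithinAt
      refine DifferentiableAt.fun_mul (DifferentiableAt.fun_mul (DifferentiableAt.fun_mul (Gamma_diff w hw) ?_) ?_) (hz1 w hw)
      · exact DifferentiableAt.const_cpow (by fun_prop) (Or.inl two_pi_ne)
      · exact DifferentiableAt.const_cpow (by fun_prop) (Or.inl (by exact_mod_cast hx.ne'))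
    · intro w hw
      exact ((hz2 w hw).const_mul _).differentiableWithinAt
  have hR : DifferentiableOn ℂ (fun ν => (∑' k : ℕ, ((k:ℂ)+1)^(ν-1) * ((√2:ℂ) * (Phi (((k:ℝ)+1) * x) : ℂ))) - (YY x : ℂ) * riemannZeta (1/2-ν)) UU := by
    apply DifferentiableOn.fun_sub (rhs_diff x hx).differentiableOn
    intro w hw
    exact ((hz1 w hw).const_mul _).differentiableWithinAt
  have := AnalyticOnNhd.eqOn_of_preconnected_of_eventuallyEq (z₀ := ((-3/4 : ℝ) : ℂ))
    (hL.analyticOnNhd UU_open) (hR.analyticOnNhd UU_open) UU_preconn ?_ ?_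
  · exact this hν
  · refine ⟨by simp only [ofReal_re]; norm_num, ?_, ?_⟩
    · intro h
      have := congrArg Complex.re h
      norm_num at this
    · intro h
      have := congrArg Complex.re h
      norm_num at this
  · have ho1 : IsOpen {ν : ℂ | -1 < ν.re} := isOpen_lt continuous_const Complex.continuous_re
    have ho2 : IsOpen {ν : ℂ | ν.re < -1/2} := isOpen_lt Complex.continuous_re continuous_const
    filter_upwards [ho1.mem_nhds (show ((-3/4 : ℝ) : ℂ) ∈ {ν : ℂ | -1 < ν.re} by simp only [Set.mem_ofPred_eq, ofReal_re]; norm_num),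
      ho2.mem_nhds (show ((-3/4 : ℝ) : ℂ) ∈ {ν : ℂ | ν.re < -1/2} by simp only [Set.mem_ofPred_eq, ofReal_re]; norm_num)] with w hw1 hw2
    exact lemma2_left x hx w hw1 hw2



lemma csigma_hasSum (s : ℂ) (h : ℕ → ℂ)
    (hs : Summable fun p : ℕ × ℕ => ((p.1:ℂ)+1)^s * h ((p.1+1)*(p.2+1))) :
    HasSum (fun n : ℕ => csigma s (n+1) * h (n+1))
      (∑' d : ℕ, ∑' m : ℕ, ((d:ℂ)+1)^s * h ((d+1)*(m+1))) := by
  have h0 : HasSum (fun p : ℕ × ℕ => ((p.1:ℂ)+1)^s * h ((p.1+1)*(p.2+1)))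
      (∑' d : ℕ, ∑' m : ℕ, ((d:ℂ)+1)^s * h ((d+1)*(m+1))) := by
    rw [← hs.tsum_prod]; exact hs.hasSum
  have h1 : HasSum (fun p : ℕ+ × ℕ+ => ((p.1:ℕ):ℂ)^s * h ((p.1:ℕ)*(p.2:ℕ)))
      (∑' d : ℕ, ∑' m : ℕ, ((d:ℂ)+1)^s * h ((d+1)*(m+1))) := by
    rw [← (Equiv.prodCongr Equiv.pnatEquivNat.symm Equiv.pnatEquivNat.symm).hasSum_iff]
    convert h0 using 2 with p
    simp [Function.comp]
  rw [← sigmaAntidiagonalEquivProd.hasSum_iff] at h1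
  rw [← hasSum_pnat_iff_hasSum_succ (f := fun n => csigma s n * h n)]
  refine h1.sigma fun n => ?_
  have h2 : csigma s n * h n = ∑ c : Nat.divisorsAntidiagonal n,
      ((fun p : ℕ+ × ℕ+ => ((p.1:ℕ):ℂ)^s * h ((p.1:ℕ)*(p.2:ℕ))) ∘ sigmaAntidiagonalEquivProd) ⟨n, c⟩ := by
    have : ∀ c : Nat.divisorsAntidiagonal n, ((fun p : ℕ+ × ℕ+ => ((p.1:ℕ):ℂ)^s * h ((p.1:ℕ)*(p.2:ℕ))) ∘ sigmaAntidiagonalEquivProd) ⟨n, c⟩ = ((c.1.1:ℕ):ℂ)^s * h n := by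
      rintro ⟨⟨a, b⟩, hc⟩
      rw [Nat.mem_divisorsAntidiagonal] at hc
      simp [sigmaAntidiagonalEquivProd, divisorsAntidiagonalFactors, hc.1]
    rw [Finset.sum_congr rfl fun c _ => this c]
    rw [Finset.univ_eq_attach, Finset.sum_attach (Nat.divisorsAntidiagonal n) (fun c => ((c.1:ℕ):ℂ)^s * h n),
      Nat.sum_divisorsAntidiagonal (fun a _ => (a:ℂ)^s * h n), csigma, Finset.sum_mul]
  rw [h2]
  exact hasSum_fintype _

lemma I_mul_cpow (z : ℂ) (hz : 0 < z.re) (w : ℂ) : (I * z)^w = Complex.exp (I*(π/2)*w) * z^w := by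
  have hz0 : z ≠ 0 := by rintro rfl; simp at hz
  have ha := abs_lt.mp (abs_arg_lt_pi_div_two_iff.mpr (Or.inl hz))
  have hl : log (I*z) = log I + log z := by
    rw [Complex.log_mul_eq_add_log_iff I_ne_zero hz0, arg_I]
    constructor <;> linarith [ha.1, ha.2, Real.pi_pos]
  rw [cpow_def_of_ne_zero (mul_ne_zero I_ne_zero hz0), cpow_def_of_ne_zero hz0, hl, log_I, ← Complex.exp_add]
  congr 1; ring

lemma neg_I_mul_cpow (z : ℂ) (hz : 0 < z.re) (w : ℂ) : (-I * z)^w = Complex.exp (-I*(π/2)*w) * z^w := by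
  have hz0 : z ≠ 0 := by rintro rfl; simp at hz
  have ha := abs_lt.mp (abs_arg_lt_pi_div_two_iff.mpr (Or.inl hz))
  have hl : log (-I*z) = log (-I) + log z := by
    rw [Complex.log_mul_eq_add_log_iff (neg_ne_zero.mpr I_ne_zero) hz0, arg_neg_I]
    constructor <;> linarith [ha.1, ha.2, Real.pi_pos]
  rw [cpow_def_of_ne_zero (mul_ne_zero (neg_ne_zero.mpr I_ne_zero) hz0), cpow_def_of_ne_zero hz0, hl, log_neg_I, ← Complex.exp_add]
  congr 1; ring

noncomputable def hR (ν : ℂ) (x : ℝ) (n : ℕ) : ℂ :=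
  1/2*(((x:ℂ)+I*n)^(-ν) + ((x:ℂ)-I*n)^(-ν)) - Complex.cos (π*ν/2) * (n:ℂ)^(-ν)

lemma hR_small (ν : ℂ) (x : ℝ) (hx : 0 < x) (n : ℕ) (hn : 1 ≤ n) :
    (n:ℂ)^(-ν) * (-Complex.cos (π*ν/2) + (n:ℂ)^ν / (2*(x:ℂ)^ν) *
      ((1 + I*(n:ℂ)/(x:ℂ))^(-ν) + (1 - I*(n:ℂ)/(x:ℂ))^(-ν))) = hR ν x n := by
  have hn0 : (n:ℂ) ≠ 0 := by exact_mod_cast (by omega : n ≠ 0)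
  have hx0 : (x:ℂ) ≠ 0 := by exact_mod_cast hx.ne'
  have e1 : (x:ℂ)+I*n = (x:ℂ)*(1 + I*(n:ℂ)/(x:ℂ)) := by field_simp
  have e2 : (x:ℂ)-I*n = (x:ℂ)*(1 - I*(n:ℂ)/(x:ℂ)) := by field_simp
  have hnv : (n:ℂ)^ν ≠ 0 := by simp [cpow_eq_zero_iff, hn0]
  have hxv : (x:ℂ)^ν ≠ 0 := by simp [cpow_eq_zero_iff, hx0]
  rw [hR, e1, e2, rmul_cpow x hx, rmul_cpow x hx, cpow_neg, cpow_neg (x:ℂ) ν]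
  field_simp
  ring

lemma hR_large (ν : ℂ) (x : ℝ) (hx : 0 < x) (n : ℕ) (hn : 1 ≤ n) :
    (n:ℂ)^(-ν) * (Complex.cos (π*ν/2) *
        ((1 + I*(x:ℂ)/(n:ℂ))^(-ν) + (1 - I*(x:ℂ)/(n:ℂ))^(-ν) - 2)
      + I * Complex.sin (π*ν/2) *
        ((1 + I*(x:ℂ)/(n:ℂ))^(-ν) - (1 - I*(x:ℂ)/(n:ℂ))^(-ν))) = 2 * hR ν x n := by
  have hn0 : (n:ℂ) ≠ 0 := by exact_mod_cast (by omega : n ≠ 0)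
  have hnr : (0:ℝ) < n := by exact_mod_cast (by omega : 0 < n)
  have f1 : (n:ℂ)^(-ν) * (1 + I*(x:ℂ)/(n:ℂ))^(-ν) = Complex.exp (I*(π/2)*(-ν)) * ((x:ℂ)-I*n)^(-ν) := by
    rw [← I_mul_cpow _ (by simp; exact hx)]
    have := rmul_cpow n hnr (1 + I*(x:ℂ)/(n:ℂ)) (-ν)
    rw [ofReal_natCast] at this
    rw [← this]
    congr 1
    field_simp
    ring_nf
    simp
  have f2 : (n:ℂ)^(-ν) * (1 - I*(x:ℂ)/(n:ℂ))^(-ν) = Complex.exp (-I*(π/2)*(-ν)) * ((x:ℂ)+I*n)^(-ν) := by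
    rw [← neg_I_mul_cpow _ (by simp; exact hx)]
    have := rmul_cpow n hnr (1 - I*(x:ℂ)/(n:ℂ)) (-ν)
    rw [ofReal_natCast] at this
    rw [← this]
    congr 1
    field_simp
    ring_nf
    simp
  have g1 : Complex.cos (π*ν/2) + I * Complex.sin (π*ν/2) = Complex.exp (I*(π/2)*ν) := by
    rw [show I*(π/2)*ν = (π*ν/2)*I by ring, exp_mul_I]; ring
  have g2 : Complex.cos (π*ν/2) - I * Complex.sin (π*ν/2) = Complex.exp (-(I*(π/2)*ν)) := by
    rw [show -(I*(π/2)*ν) = (-(π*ν/2))*I by ring, exp_mul_I, Complex.cos_neg, Complex.sin_neg]; ring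
  have g3 : Complex.exp (I*(π/2)*ν) * Complex.exp (-(I*(π/2)*ν)) = 1 := by
    rw [← Complex.exp_add]; simp
  have f3 : Complex.exp (I*(π/2)*(-ν)) = Complex.exp (-(I*(π/2)*ν)) := by congr 1; ring
  have f4 : Complex.exp (-I*(π/2)*(-ν)) = Complex.exp (I*(π/2)*ν) := by congr 1; ring
  rw [f3] at f1
  rw [f4] at f2
  rw [hR]
  linear_combination (Complex.cos (π*ν/2) + I * Complex.sin (π*ν/2)) * f1
    + (Complex.cos (π*ν/2) - I * Complex.sin (π*ν/2)) * f2
    + Complex.exp (-(I*(π/2)*ν)) * ((x:ℂ)-I*n)^(-ν) * g1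
    + Complex.exp ((I*(π/2)*ν)) * ((x:ℂ)+I*n)^(-ν) * g2
    + (((x:ℂ)-I*n)^(-ν)+((x:ℂ)+I*n)^(-ν)) * g3


noncomputable def hL (x : ℝ) (n : ℕ) : ℂ := (((√(n:ℝ))⁻¹ * ff (n*x) : ℝ) : ℂ)

lemma hL_mul (x : ℝ) (k j : ℕ) : hL x ((k+1)*(j+1)) =
    ((((√((k:ℝ)+1))⁻¹:ℝ)):ℂ) * (((√((j:ℝ)+1))⁻¹ * ff (((j:ℝ)+1)*(((k:ℝ)+1)*x)) : ℝ):ℂ) := by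
  rw [hL, ← ofReal_mul]
  congr 1
  push_cast
  rw [Real.sqrt_mul (by positivity), mul_inv, mul_assoc]
  congr 2
  rw [show ((k:ℝ)+1)*((j:ℝ)+1)*x = ((j:ℝ)+1)*(((k:ℝ)+1)*x) by ring]

lemma sqrt_inv_cpow (k : ℕ) : ((((√((k:ℝ)+1))⁻¹:ℝ)):ℂ) = ((k:ℂ)+1)^(-(1/2):ℂ) := by
  have : ((k:ℂ)+1) = (((k:ℝ)+1 : ℝ) : ℂ) := by push_cast; rfl
  rw [cpow_neg, this, half_cpow _ (by positivity)]
  push_cast; rfl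

lemma lhs_eq (s : ℂ) (x : ℝ) (hx : 0 < x) :
    (∑' n : ℕ, csigma s (n+1) * hL x (n+1)) =
      ∑' k : ℕ, ((k:ℂ)+1)^(s-1/2) * (Phi (((k:ℝ)+1)*x):ℂ) := by
  have hc : 0 < YY x / 2 := by have := YY_pos x hx; positivity
  have hs : Summable fun p : ℕ × ℕ => ((p.1:ℂ)+1)^s * hL x ((p.1+1)*(p.2+1)) := by
    refine Summable.of_norm_bounded (Summable.mul_of_nonneg
      (summable_rpow_exp_sqrt s.re (YY x/2) hc) (summable_exp_sqrt (YY x/2) hc)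
      (fun k => by positivity) (fun k => by positivity)) ?_
    rintro ⟨k, j⟩
    simp only
    rw [hL_mul, norm_mul, norm_mul, nat_cpow_norm, norm_real, norm_real, Real.norm_eq_abs, Real.norm_eq_abs]
    have h1 := double_bound x hx j k
    have h2 : |(√((k:ℝ)+1))⁻¹| ≤ 1 := by
      rw [abs_of_nonneg (by positivity)]
      exact inv_le_one_of_one_le₀ (one_le_sqrt_nat k)
    have h3 : |(√((k:ℝ)+1))⁻¹| * |(√((j:ℝ)+1))⁻¹*ff (((j:ℝ)+1)*(((k:ℝ)+1)*x))| ≤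
      1 * (Real.exp (-(YY x/2*√((k:ℝ)+1)))*Real.exp (-(YY x/2*√((j:ℝ)+1)))) :=
      mul_le_mul h2 h1 (abs_nonneg _) zero_le_one
    calc _ ≤ ((k:ℝ)+1)^s.re * (1 * (Real.exp (-(YY x/2*√((k:ℝ)+1)))*Real.exp (-(YY x/2*√((j:ℝ)+1))))) := by gcongr
      _ = _ := by ring
  rw [(csigma_hasSum s (hL x) hs).tsum_eq]
  refine tsum_congr fun k => ?_
  rw [tsum_mul_left]
  simp only [hL_mul]
  rw [tsum_mul_left, ← ofReal_tsum, sqrt_inv_cpow, ← mul_assoc, ← cpow_add _ _ (nat_ne k)]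
  rw [← sub_eq_add_neg]
  rfl

lemma hR_mul (ν : ℂ) (x : ℝ) (d m : ℕ) : ((d:ℂ)+1)^(ν-1/2) * hR ν x ((d+1)*(m+1)) =
    1/2 * ((((√((d:ℝ)+1))⁻¹:ℝ)):ℂ) * (lq ν m (x/((d:ℝ)+1)) - lq ν m 0) := by
  have hd := nat_ne d
  have hdr : (0:ℝ) < (d:ℝ)+1 := by positivity
  have hmr : (0:ℝ) < (m:ℝ)+1 := by positivity
  have key : ∀ z : ℂ, ((d:ℂ)+1)^(ν-1/2) * (((d:ℂ)+1)*z)^(-ν) = ((((√((d:ℝ)+1))⁻¹:ℝ)):ℂ) * z^(-ν) := by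
    intro z
    have := rmul_cpow ((d:ℝ)+1) hdr z (-ν)
    push_cast at this
    rw [this, ← mul_assoc, ← cpow_add _ _ hd, sqrt_inv_cpow]
    congr 2; ring
  have k1 := key (((x/((d:ℝ)+1):ℝ):ℂ)+I*((m:ℂ)+1))
  have k2 := key (((x/((d:ℝ)+1):ℝ):ℂ)-I*((m:ℂ)+1))
  have k3 := key ((m:ℂ)+1)
  rw [lq_zero, lq, hR]
  have e1 : (x:ℂ)+I*(((d+1)*(m+1):ℕ):ℂ) = ((d:ℂ)+1)*(((x/((d:ℝ)+1):ℝ):ℂ)+I*((m:ℂ)+1)) := by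
    push_cast; field_simp
  have e2 : (x:ℂ)-I*(((d+1)*(m+1):ℕ):ℂ) = ((d:ℂ)+1)*(((x/((d:ℝ)+1):ℝ):ℂ)-I*((m:ℂ)+1)) := by
    push_cast; field_simp
  have e3 : (((d+1)*(m+1):ℕ):ℂ) = ((d:ℂ)+1)*((m:ℂ)+1) := by push_cast; ring
  rw [e1, e2, e3]
  linear_combination 1/2*k1+1/2*k2-Complex.cos (π*ν/2)*k3

lemma rhs_hasSum (s : ℂ) (hs : 0 < s.re) (x : ℝ) (hx : 0 < x) :
    ∃ S : ℂ, HasSum (fun n : ℕ => csigma s (n+1) * hR (s+1/2) x (n+1)) S ∧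
      (∑' d:ℕ, (((√((d:ℝ)+1))⁻¹:ℝ):ℂ)*Rf (s+1/2) (x/((d:ℝ)+1))) =
        2 * Gamma (s+1/2) * (2*π:ℂ)^(-(s+1/2)) * S := by
  set ν : ℂ := s+1/2 with hν
  have hre : ν.re = s.re + 1/2 := by simp [hν]
  have hsν : s = ν - 1/2 := by rw [hν]; ring
  have hU : ν ∈ UU := by
    refine ⟨by rw [hre]; linarith, ?_, ?_⟩
    · intro h; rw [h] at hre; simp at hre; linarith
    · intro h; rw [h] at hre; norm_num at hre; linarith
  have hsum : Summable fun p : ℕ × ℕ => ((p.1:ℂ)+1)^s * hR ν x ((p.1+1)*(p.2+1)) := by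
    refine Summable.of_norm_bounded ((Summable.mul_of_nonneg
      (summable_shift_rpow (-(3/2)) (by norm_num)) (summable_shift_rpow (-ν.re-1) (by rw [hre]; linarith))
      (fun k => by positivity) (fun k => by positivity)).mul_left (‖ν‖*Real.exp (π*|ν.im|)*x)) ?_
    rintro ⟨d, m⟩
    simp only
    rw [hsν, hR_mul, norm_mul, norm_mul, norm_real, Real.norm_eq_abs, abs_of_nonneg (by positivity), ← rpow_three_half]
    have h1 := lq_diff1 ν (by rw [hre]; linarith) m (x/((d:ℝ)+1)) (by positivity)
    have h2 : ‖(1/2:ℂ)‖ = 1/2 := by norm_num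
    rw [h2]
    calc _ ≤ 1/2 * (√((d:ℝ)+1))⁻¹ * (2*(‖ν‖*(((m:ℝ)+1)^(-ν.re-1)*Real.exp (π*|ν.im|))*(x/((d:ℝ)+1)))) := by gcongr
      _ = _ := by rw [div_eq_mul_inv x]; ring
  refine ⟨_, csigma_hasSum s (hR ν x) hsum, ?_⟩
  rw [← tsum_mul_left]
  refine tsum_congr fun d => ?_
  rw [Rf_eq_Tf ν hU _ (by positivity), Tf_eq_pos ν (by rw [hre]; linarith) _ (by positivity)]
  have : ∀ m : ℕ, ((d:ℂ)+1)^s * hR ν x ((d+1)*(m+1)) = 1/2 * ((((√((d:ℝ)+1))⁻¹:ℝ)):ℂ) * (lq ν m (x/((d:ℝ)+1)) - lq ν m 0) := by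
    intro m; rw [hsν]; exact hR_mul ν x d m
  rw [tsum_congr this, tsum_mul_left]
  ring

lemma csigma_zero (s : ℂ) : csigma s 0 = 0 := by simp [csigma]

lemma braces (s : ℂ) (x : ℝ) (hx : 0 < x) (S : ℂ)
    (hS : HasSum (fun n : ℕ => csigma s (n+1) * hR (s+1/2) x (n+1)) S) :
    ((∑ n ∈ Finset.range (⌈x⌉₊ + 1), if 1 ≤ n ∧ (n : ℝ) < x then
            csigma s n * (n : ℂ) ^ (-s - 1 / 2) *
              (-Complex.sin ((π : ℂ) / 4 - (π : ℂ) * s / 2)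
                + (n : ℂ) ^ (s + 1 / 2) / (2 * (x : ℂ) ^ (s + 1 / 2)) *
                  ((1 + Complex.I * (n : ℂ) / (x : ℂ)) ^ (-(s + 1 / 2)) +
                    (1 - Complex.I * (n : ℂ) / (x : ℂ)) ^ (-(s + 1 / 2))))
          else 0)
        + (1 / 2) * ∑' n : ℕ, if 1 ≤ n ∧ x ≤ (n : ℝ) then
            csigma s n * (n : ℂ) ^ (-s - 1 / 2) *
              (Complex.cos ((π : ℂ) / 4 + (π : ℂ) * s / 2) *
                  ((1 + Complex.I * (x : ℂ) / (n : ℂ)) ^ (-(s + 1 / 2)) +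
                    (1 - Complex.I * (x : ℂ) / (n : ℂ)) ^ (-(s + 1 / 2)) - 2)
                + Complex.I * Complex.sin ((π : ℂ) / 4 + (π : ℂ) * s / 2) *
                  ((1 + Complex.I * (x : ℂ) / (n : ℂ)) ^ (-(s + 1 / 2)) -
                    (1 - Complex.I * (x : ℂ) / (n : ℂ)) ^ (-(s + 1 / 2))))
          else 0) = S := by
  set g : ℕ → ℂ := fun n => csigma s n * hR (s+1/2) x n with hg
  have hg0 : g 0 = 0 := by simp [hg, csigma_zero]
  have hgS : HasSum g S := by
    have := (hasSum_nat_add_iff (f := g) 1).mp hS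
    simpa [hg0] using this
  have hen : -s-1/2 = -(s+1/2) := by ring
  have hsin : Complex.sin ((π : ℂ) / 4 - (π : ℂ) * s / 2) = Complex.cos (π*(s+1/2)/2) := by
    rw [← Complex.cos_pi_div_two_sub, show (π:ℂ)/2 - ((π : ℂ) / 4 - (π : ℂ) * s / 2) = π*(s+1/2)/2 by ring]
  have hth : (π : ℂ) / 4 + (π : ℂ) * s / 2 = π*(s+1/2)/2 := by ring
  have A1 : ∀ n : ℕ, (if 1 ≤ n ∧ (n : ℝ) < x then
            csigma s n * (n : ℂ) ^ (-s - 1 / 2) *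
              (-Complex.sin ((π : ℂ) / 4 - (π : ℂ) * s / 2)
                + (n : ℂ) ^ (s + 1 / 2) / (2 * (x : ℂ) ^ (s + 1 / 2)) *
                  ((1 + Complex.I * (n : ℂ) / (x : ℂ)) ^ (-(s + 1 / 2)) +
                    (1 - Complex.I * (n : ℂ) / (x : ℂ)) ^ (-(s + 1 / 2))))
          else 0) = if (n:ℝ) < x then g n else 0 := by
    intro n
    by_cases h1 : 1 ≤ n
    · by_cases h2 : (n:ℝ) < x
      · rw [if_pos ⟨h1, h2⟩, if_pos h2, hg, hen, hsin, mul_assoc, hR_small _ x hx n h1]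
      · rw [if_neg (fun h => h2 h.2), if_neg h2]
    · have : n = 0 := by omega
      subst this
      simp [hg0]
  have A2 : ∀ n : ℕ, (if 1 ≤ n ∧ x ≤ (n : ℝ) then
            csigma s n * (n : ℂ) ^ (-s - 1 / 2) *
              (Complex.cos ((π : ℂ) / 4 + (π : ℂ) * s / 2) *
                  ((1 + Complex.I * (x : ℂ) / (n : ℂ)) ^ (-(s + 1 / 2)) +
                    (1 - Complex.I * (x : ℂ) / (n : ℂ)) ^ (-(s + 1 / 2)) - 2)
                + Complex.I * Complex.sin ((π : ℂ) / 4 + (π : ℂ) * s / 2) *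
                  ((1 + Complex.I * (x : ℂ) / (n : ℂ)) ^ (-(s + 1 / 2)) -
                    (1 - Complex.I * (x : ℂ) / (n : ℂ)) ^ (-(s + 1 / 2))))
          else 0) = 2 * (if (n:ℝ) < x then 0 else g n) := by
    intro n
    by_cases h1 : 1 ≤ n
    · by_cases h2 : (n:ℝ) < x
      · rw [if_pos h2, if_neg (fun h => absurd h2 (not_lt.mpr h.2)), mul_zero]
      · rw [if_neg h2, if_pos ⟨h1, not_lt.mp h2⟩, hg, hen, hth, mul_assoc, hR_large _ x hx n h1]
        ring
    · have : n = 0 := by omega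
      subst this
      simp [hg0]
  rw [Finset.sum_congr rfl fun n _ => A1 n, tsum_congr A2, tsum_mul_left]
  have hfin : HasSum (fun n : ℕ => if (n:ℝ) < x then g n else 0)
      (∑ n ∈ Finset.range (⌈x⌉₊ + 1), if (n:ℝ) < x then g n else 0) := by
    refine hasSum_sum_of_ne_finset_zero fun n hn => ?_
    rw [if_neg]
    intro h
    apply hn
    rw [Finset.mem_range]
    have : n < ⌈x⌉₊ := Nat.lt_ceil.mpr h
    omega
  have hrest : (fun n : ℕ => if (n:ℝ) < x then 0 else g n) = fun n => g n - (if (n:ℝ) < x then g n else 0) := by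
    funext n; split_ifs <;> simp
  have := hgS.sub hfin
  rw [← hrest] at this
  rw [this.tsum_eq]
  ring

theorem main_thm
    (s : ℂ) (hs : 0 < s.re) (x : ℝ) (hx : 0 < x) :
    (∑' n : ℕ, csigma s (n + 1) * ((Real.sqrt ((n : ℝ) + 1) : ℝ) : ℂ)⁻¹ *
        ((Real.exp (-(2 * π * Real.sqrt (2 * ((n : ℝ) + 1) * x))) : ℝ) : ℂ) *
        ((Real.sin (π / 4 - 2 * π * Real.sqrt (2 * ((n : ℝ) + 1) * x)) : ℝ) : ℂ))
    = 4 * (π : ℂ) *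
        ((Real.sqrt x : ℂ) / 2 * riemannZeta (-s)
          + riemannZeta (1 / 2) * riemannZeta (1 / 2 - s) / (4 * (π : ℂ) * (Real.sqrt 2 : ℂ))
          + Complex.Gamma (s + 1 / 2) * riemannZeta (-s) /
              ((2 : ℂ) ^ (s + 3) * (π : ℂ) ^ (s + 3 / 2) * (x : ℂ) ^ (s + 1 / 2)))
      + Complex.Gamma (s + 1 / 2) / ((2 : ℂ) ^ s * (π : ℂ) ^ (s + 1 / 2)) *
        ((∑ n ∈ Finset.range (⌈x⌉₊ + 1), if 1 ≤ n ∧ (n : ℝ) < x then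
            csigma s n * (n : ℂ) ^ (-s - 1 / 2) *
              (-Complex.sin ((π : ℂ) / 4 - (π : ℂ) * s / 2)
                + (n : ℂ) ^ (s + 1 / 2) / (2 * (x : ℂ) ^ (s + 1 / 2)) *
                  ((1 + Complex.I * (n : ℂ) / (x : ℂ)) ^ (-(s + 1 / 2)) +
                    (1 - Complex.I * (n : ℂ) / (x : ℂ)) ^ (-(s + 1 / 2))))
          else 0)
        + (1 / 2) * ∑' n : ℕ, if 1 ≤ n ∧ x ≤ (n : ℝ) then
            csigma s n * (n : ℂ) ^ (-s - 1 / 2) *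
              (Complex.cos ((π : ℂ) / 4 + (π : ℂ) * s / 2) *
                  ((1 + Complex.I * (x : ℂ) / (n : ℂ)) ^ (-(s + 1 / 2)) +
                    (1 - Complex.I * (x : ℂ) / (n : ℂ)) ^ (-(s + 1 / 2)) - 2)
                + Complex.I * Complex.sin ((π : ℂ) / 4 + (π : ℂ) * s / 2) *
                  ((1 + Complex.I * (x : ℂ) / (n : ℂ)) ^ (-(s + 1 / 2)) -
                    (1 - Complex.I * (x : ℂ) / (n : ℂ)) ^ (-(s + 1 / 2))))
          else 0) := by
  obtain ⟨S, hS, hR⟩ := rhs_hasSum s hs x hx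
  rw [braces s x hx S hS]
  have hre : (s+1/2).re = s.re + 1/2 := by simp
  have hU : s+1/2 ∈ UU := by
    refine ⟨by rw [hre]; linarith, ?_, ?_⟩
    · intro h; rw [h] at hre; simp at hre; linarith
    · intro h; rw [h] at hre; norm_num at hre; linarith
  have h2 := lemma2 x hx (s+1/2) hU
  rw [hR] at h2
  have hL' : (∑' n : ℕ, csigma s (n + 1) * ((Real.sqrt ((n : ℝ) + 1) : ℝ) : ℂ)⁻¹ *
        ((Real.exp (-(2 * π * Real.sqrt (2 * ((n : ℝ) + 1) * x))) : ℝ) : ℂ) *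
        ((Real.sin (π / 4 - 2 * π * Real.sqrt (2 * ((n : ℝ) + 1) * x)) : ℝ) : ℂ)) =
      ∑' k : ℕ, ((k:ℂ)+1)^(s-1/2) * (Phi (((k:ℝ)+1)*x):ℂ) := by
    rw [← lhs_eq s x hx]
    refine tsum_congr fun n => ?_
    rw [hL, ff, YY, ← mul_assoc 2 (((n+1:ℕ):ℝ)) x]
    push_cast
    ring
  rw [hL']
  have e1 : (1/2 - (s+1/2) : ℂ) = -s := by ring
  have e2 : (1 - (s+1/2) : ℂ) = 1/2 - s := by ring
  have e3 : (s+1/2 - 1 : ℂ) = s - 1/2 := by ring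
  rw [e1, e2, e3] at h2
  have h3 : (∑' k:ℕ, ((k:ℂ)+1)^(s-1/2)*((√2:ℂ)*(Phi (((k:ℝ)+1)*x):ℂ))) =
      (√2:ℂ) * ∑' k : ℕ, ((k:ℂ)+1)^(s-1/2) * (Phi (((k:ℝ)+1)*x):ℂ) := by
    rw [← tsum_mul_left]
    exact tsum_congr fun k => by ring
  rw [h3] at h2
  generalize (∑' k : ℕ, ((k:ℂ)+1)^(s-1/2) * (Phi (((k:ℝ)+1)*x):ℂ)) = L at h2 ⊢
  have hpi : (π:ℂ) ≠ 0 := by exact_mod_cast Real.pi_ne_zero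
  have hx0 : (x:ℂ) ≠ 0 := by exact_mod_cast hx.ne'
  have hY : (YY x : ℂ) = 2*π*((√2:ℂ)*(√x:ℂ)) := by
    rw [YY, Real.sqrt_mul (by norm_num)]; push_cast; ring
  have c1 : (2*π:ℂ)^(-(s+1/2)) = ((2:ℂ)^s*(√2:ℂ)*((π:ℂ)^(s+1/2)))⁻¹ := by
    have := rmul_cpow 2 (by norm_num) (π:ℂ) (-(s+1/2))
    push_cast at this
    rw [this, cpow_neg, cpow_neg, cpow_add _ _ two_ne_zero, mul_inv]
    have h := half_cpow 2 (by norm_num)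
    push_cast at h
    rw [h, mul_inv, mul_inv]
  have c2 : (2:ℂ)^(s+3) = 8 * (2:ℂ)^s := by
    rw [cpow_add _ _ two_ne_zero]
    have : (2:ℂ)^(3:ℂ) = 8 := by
      rw [show (3:ℂ) = ((3:ℕ):ℂ) by norm_num, cpow_natCast]; norm_num
    rw [this]; ring
  have c3 : (π:ℂ)^(s+3/2) = π * (π:ℂ)^(s+1/2) := by
    rw [show s+3/2 = (s+1/2)+1 by ring, cpow_add _ _ hpi, cpow_one]; ring
  have n1 : (2:ℂ)^s ≠ 0 := by simp [cpow_eq_zero_iff]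
  have n2 : (π:ℂ)^(s+1/2) ≠ 0 := by simp [cpow_eq_zero_iff, hpi]
  have n3 : (x:ℂ)^(s+1/2) ≠ 0 := by simp [cpow_eq_zero_iff, hx0]
  have n4 : (√2:ℂ) ≠ 0 := by
    intro h; have := sqrt_two_sq; rw [h] at this; simp at this
  rw [c1, hY, cpow_neg (x:ℂ)] at h2
  rw [c2, c3]
  have hw : (√2:ℂ)⁻¹ = (√2:ℂ)/2 := by
    have := sqrt_two_sq
    field_simp
    linear_combination -this
  have hw2 : (√2:ℂ)*(√2:ℂ) = 2 := sqrt_two_sq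
  apply mul_left_cancel₀ n4
  generalize riemannZeta (1/2) * riemannZeta (1/2-s) = Z at h2 ⊢
  have c5 : 4*(π:ℂ)*((√x:ℂ)/2*riemannZeta (-s) + Z/(4*(π:ℂ)*(√2:ℂ)) +
      Gamma (s+1/2)*riemannZeta (-s)/(8*(2:ℂ)^s*(π*(π:ℂ)^(s+1/2))*(x:ℂ)^(s+1/2))) =
      2*π*(√x:ℂ)*riemannZeta (-s) + Z*(√2:ℂ)⁻¹ +
      Gamma (s+1/2)*riemannZeta (-s)*((2:ℂ)^s)⁻¹*((π:ℂ)^(s+1/2))⁻¹*((x:ℂ)^(s+1/2))⁻¹/2 := by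
    field_simp
    ring
  rw [c5, hw]
  rw [mul_inv, mul_inv, hw] at h2
  rw [div_eq_mul_inv (Gamma (s+1/2)), mul_inv]
  linear_combination -h2 - Z/2*hw2


theorem ramanujan_p336_companion
    (s : ℂ) (hs : 0 < s.re) (x : ℝ) (hx : 0 < x) :
    (∑' n : ℕ, csigma s (n + 1) * ((Real.sqrt ((n : ℝ) + 1) : ℝ) : ℂ)⁻¹ *
        ((Real.exp (-(2 * π * Real.sqrt (2 * ((n : ℝ) + 1) * x))) : ℝ) : ℂ) *
        ((Real.sin (π / 4 - 2 * π * Real.sqrt (2 * ((n : ℝ) + 1) * x)) : ℝ) : ℂ))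
    = 4 * (π : ℂ) *
        ((Real.sqrt x : ℂ) / 2 * riemannZeta (-s)
          + riemannZeta (1 / 2) * riemannZeta (1 / 2 - s) / (4 * (π : ℂ) * (Real.sqrt 2 : ℂ))
          + Complex.Gamma (s + 1 / 2) * riemannZeta (-s) /
              ((2 : ℂ) ^ (s + 3) * (π : ℂ) ^ (s + 3 / 2) * (x : ℂ) ^ (s + 1 / 2)))
      + Complex.Gamma (s + 1 / 2) / ((2 : ℂ) ^ s * (π : ℂ) ^ (s + 1 / 2)) *
        ((∑ n ∈ Finset.range (⌈x⌉₊ + 1), if 1 ≤ n ∧ (n : ℝ) < x then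
            csigma s n * (n : ℂ) ^ (-s - 1 / 2) *
              (-Complex.sin ((π : ℂ) / 4 - (π : ℂ) * s / 2)
                + (n : ℂ) ^ (s + 1 / 2) / (2 * (x : ℂ) ^ (s + 1 / 2)) *
                  ((1 + Complex.I * (n : ℂ) / (x : ℂ)) ^ (-(s + 1 / 2)) +
                    (1 - Complex.I * (n : ℂ) / (x : ℂ)) ^ (-(s + 1 / 2))))
          else 0)
        + (1 / 2) * ∑' n : ℕ, if 1 ≤ n ∧ x ≤ (n : ℝ) then
            csigma s n * (n : ℂ) ^ (-s - 1 / 2) *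
              (Complex.cos ((π : ℂ) / 4 + (π : ℂ) * s / 2) *
                  ((1 + Complex.I * (x : ℂ) / (n : ℂ)) ^ (-(s + 1 / 2)) +
                    (1 - Complex.I * (x : ℂ) / (n : ℂ)) ^ (-(s + 1 / 2)) - 2)
                + Complex.I * Complex.sin ((π : ℂ) / 4 + (π : ℂ) * s / 2) *
                  ((1 + Complex.I * (x : ℂ) / (n : ℂ)) ^ (-(s + 1 / 2)) -
                    (1 - Complex.I * (x : ℂ) / (n : ℂ)) ^ (-(s + 1 / 2))))
          else 0) := by
  exact main_thm s hs x hx
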